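/- Let V ⊆ ℂ^n be an irreducible variety of dimension d, and let P_1,…,P_{n−d} be polynomials such that for every 1 ≤ i ≤ n−d: deg(P_i) = δ_i(V), the maximal dimension of an irreducible component of Z(P_1,…,P_i) containing V is n−i, and Z(P_1,…,P_i) contains an (n−i)-minimal variety of V. Then for every 1 ≤ m ≤ n−d, every irreducible component W of Z(P_1,…,P_m) that has dimension n−m and contains V satisfies deg(W) ∼_n ∏_{i=1}^m δ_i(V) and δ_i(W) ∼_n δ_i(V) for every 1 ≤ i ≤ m, where X ∼_n Y means c(n)·Y ≤ X ≤ C(n)·Y for constants 0 < c(n) ≤ C(n) depending only on n. -/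

import Mathlib

open MvPolynomial Set

noncomputable section

namespace Paper

variable (n : ℕ)

/-- The zero locus in `ℂⁿ` of a set of polynomials. -/
def zeroLocus (I : Set (MvPolynomial (Fin n) ℂ)) : Set (Fin n → ℂ) :=
  {x | ∀ f ∈ I, eval x f = 0}

/-- A subset of `ℂⁿ` is algebraic if it is the zero locus of a set of polynomials. -/
def IsAlgebraicSet (V : Set (Fin n → ℂ)) : Prop :=
  ∃ I : Set (MvPolynomial (Fin n) ℂ), V = zeroLocus n I

/-- An irreducible (affine) variety in `ℂⁿ`: a nonempty algebraic set that is not covered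
by two algebraic sets unless it is contained in one of them. -/
def IsIrredVariety (V : Set (Fin n → ℂ)) : Prop :=
  IsAlgebraicSet n V ∧ V.Nonempty ∧
    ∀ V₁ V₂ : Set (Fin n → ℂ), IsAlgebraicSet n V₁ → IsAlgebraicSet n V₂ →
      V ⊆ V₁ ∪ V₂ → V ⊆ V₁ ∨ V ⊆ V₂

/-- There is a strictly increasing chain of `d + 1` irreducible varieties inside `V`. -/
def HasChain (V : Set (Fin n → ℂ)) (d : ℕ) : Prop :=
  ∃ W : Fin (d + 1) → Set (Fin n → ℂ),
    (∀ i, IsIrredVariety n (W i)) ∧ (∀ i j : Fin (d + 1), i < j → W i ⊂ W j) ∧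
      W (Fin.last d) ⊆ V

/-- The (Krull) dimension of a subset of `ℂⁿ`, as the length of the longest chain of
irreducible subvarieties. -/
def dim (V : Set (Fin n → ℂ)) : ℕ := sSup {d | HasChain n V d}

/-- `W` is an irreducible component of `X`: an irreducible subvariety that is maximal among
irreducible subvarieties of `X`. -/
def IsIrredComponent (W X : Set (Fin n → ℂ)) : Prop :=
  IsIrredVariety n W ∧ W ⊆ X ∧
    ∀ W', IsIrredVariety n W' → W ⊆ W' → W' ⊆ X → W' = W

/-- The degree of an irreducible variety `V ⊆ ℂⁿ` of dimension `d` (i.e. the degree of its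
projective closure): the largest finite number of points in which an affine-linear subspace of
dimension `n - d` meets `V`. -/
def degree (V : Set (Fin n → ℂ)) : ℕ :=
  sSup { m | ∃ L : AffineSubspace ℂ (Fin n → ℂ),
    Module.finrank ℂ L.direction = n - dim n V ∧ (V ∩ ↑L).Finite ∧ (V ∩ ↑L).ncard = m }

/-- The degree of an algebraic set: the sum of the degrees of its irreducible components. -/
def degreeSum (X : Set (Fin n → ℂ)) : ℕ :=
  ∑ᶠ W ∈ {W | IsIrredComponent n W X}, degree n W

/-- The maximal dimension of an irreducible component of `X` containing `V` equals `e`. -/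
def MaxCompDimEq (X V : Set (Fin n → ℂ)) (e : ℕ) : Prop :=
  (∃ W, IsIrredComponent n W X ∧ V ⊆ W ∧ dim n W = e) ∧
    ∀ W, IsIrredComponent n W X → V ⊆ W → dim n W ≤ e

/-- The partial degrees `δ_i(V)` of an irreducible variety `V`:  the minimal `δ` such that there
are polynomials of degree at most `δ` cutting out an algebraic set containing `V` whose
irreducible components containing `V` have maximal dimension `n - i`.  By convention
`δ_0(V) = 0`. -/
def partialDeg (V : Set (Fin n → ℂ)) (i : ℕ) : ℕ :=
  if i = 0 then 0
  else sInf { δ | ∃ I : Finset (MvPolynomial (Fin n) ℂ),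
    (∀ f ∈ I, f.totalDegree ≤ δ) ∧ V ⊆ zeroLocus n ↑I ∧
      MaxCompDimEq n (zeroLocus n ↑I) V (n - i) }

/-- The partial degrees as extended naturals, with the convention `δ_i(V) = ∞` for
`i > n - dim V`. -/
def partialDegE (V : Set (Fin n → ℂ)) (i : ℕ) : ℕ∞ :=
  if i ≤ n - dim n V then (partialDeg n V i : ℕ∞) else ⊤

/-- `δ(V)` for an irreducible variety `V`: the minimal `δ` such that `V` is an irreducible
component of the zero set of a finite family of polynomials of degree at most `δ`. -/
def deltaIrr (V : Set (Fin n → ℂ)) : ℕ :=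
  sInf { δ | ∃ I : Finset (MvPolynomial (Fin n) ℂ),
    (∀ f ∈ I, f.totalDegree ≤ δ) ∧ IsIrredComponent n V (zeroLocus n ↑I) }

/-- `δ(V)` for a general algebraic set `V`: the minimal `δ` such that every irreducible
component of `V` is an irreducible component of the zero set of a finite family of polynomials
of degree at most `δ`. -/
def deltaSet (V : Set (Fin n → ℂ)) : ℕ :=
  sInf { δ | ∃ I : Finset (MvPolynomial (Fin n) ℂ),
    (∀ f ∈ I, f.totalDegree ≤ δ) ∧
      ∀ W, IsIrredComponent n W V → IsIrredComponent n W (zeroLocus n ↑I) }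

/-- An algebraic set all of whose irreducible components have dimension `d`. -/
def IsAlgSetOfDim (V : Set (Fin n → ℂ)) (d : ℕ) : Prop :=
  IsAlgebraicSet n V ∧ V.Nonempty ∧ ∀ W, IsIrredComponent n W V → dim n W = d

/-- `Δ_i(V) = max (deg V / (δ_{i+1}(V) ⋯ δ_{n-d}(V))) 1`. -/
def Delta (V : Set (Fin n → ℂ)) (i : ℕ) : ℝ :=
  max ((degree n V : ℝ) / ∏ j ∈ Finset.Icc (i + 1) (n - dim n V), (partialDeg n V j : ℝ)) 1

/-- `i` is admissible with respect to `V` if `δ_{i+1}(V) > 2 i δ_i(V)` (with the convention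
`δ_i(V) = ∞` for `i > n - dim V`). -/
def Admissible (V : Set (Fin n → ℂ)) (i : ℕ) : Prop :=
  ((2 * i : ℕ) : ℕ∞) * partialDegE n V i < partialDegE n V (i + 1)

/-- The interval `ℛ_i(V) = [c₁ δ_i(V)^{n-i} Δ_i(V), (c₀/2) δ_{i+1}(V)^{n-i} Δ_i(V)]`,
where `δ_{n-d+1}(V) = ∞` makes the last interval a half-line. -/
def RSet (c0 c1 : ℝ) (V : Set (Fin n → ℂ)) (i : ℕ) : Set ℝ :=
  if i = n - dim n V then
    Set.Ici (c1 * (partialDeg n V i : ℝ) ^ (n - i) * Delta n V i)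
  else
    Set.Icc (c1 * (partialDeg n V i : ℝ) ^ (n - i) * Delta n V i)
      ((c0 / 2) * (partialDeg n V (i + 1) : ℝ) ^ (n - i) * Delta n V i)

/-- The interval `ℛ^l_{s,τ}(V) = [τ δ_s(V)^{n-(s+l)} Δ_s(V), τ δ_{s+1}(V)^{n-(s+l)} Δ_s(V)]`,
where `δ_{n-d+1}(V) = ∞` makes the last interval a half-line. -/
def RlSet (τ : ℝ) (l : ℕ) (V : Set (Fin n → ℂ)) (s : ℕ) : Set ℝ :=
  if s = n - dim n V then
    Set.Ici (τ * (partialDeg n V s : ℝ) ^ (n - (s + l)) * Delta n V s)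
  else
    Set.Icc (τ * (partialDeg n V s : ℝ) ^ (n - (s + l)) * Delta n V s)
      (τ * (partialDeg n V (s + 1) : ℝ) ^ (n - (s + l)) * Delta n V s)

/-- The ideal `I(V)` of polynomials vanishing on `V ⊆ ℂⁿ`. -/
def vanishingIdeal (V : Set (Fin n → ℂ)) : Ideal (MvPolynomial (Fin n) ℂ) where
  carrier := {f | ∀ x ∈ V, eval x f = 0}
  add_mem' := by
    intro a b ha hb x hx
    simp [ha x hx, hb x hx]
  zero_mem' := by
    intro x hx
    simp
  smul_mem' := by
    intro c f hf x hx
    simp [smul_eq_mul, hf x hx]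

/-- The ideal `I_ℝ(V)` of real polynomials vanishing on `V ⊆ ℂⁿ`. -/
def vanishingIdealR (V : Set (Fin n → ℂ)) : Ideal (MvPolynomial (Fin n) ℝ) :=
  (vanishingIdeal n V).comap (MvPolynomial.map (algebraMap ℝ ℂ))

/-- The affine Hilbert function `H_{I(V)}(m) = dim_ℂ ℂ[x]_{≤ m} / I(V)_{≤ m}`, realised as the
dimension of the image of the space of polynomials of total degree at most `m` in the quotient
ring `ℂ[x]/I(V)`. -/
def hilbert (V : Set (Fin n → ℂ)) (m : ℕ) : ℕ :=
  Module.finrank ℂ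
    (Submodule.map (Ideal.Quotient.mkₐ ℂ (vanishingIdeal n V)).toLinearMap
      (restrictTotalDegree (Fin n) ℂ m))

/-- The real affine Hilbert function `H_{I(V),ℝ}(m) = dim_ℝ ℝ[x]_{≤ m} / I_ℝ(V)_{≤ m}`. -/
def hilbertR (V : Set (Fin n → ℂ)) (m : ℕ) : ℕ :=
  Module.finrank ℝ
    (Submodule.map (Ideal.Quotient.mkₐ ℝ (vanishingIdealR n V)).toLinearMap
      (restrictTotalDegree (Fin n) ℝ m))

/-- The inclusion `ℝⁿ → ℂⁿ`. -/
def toC (x : Fin n → ℝ) : Fin n → ℂ := fun i => (x i : ℂ)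

/-- The set of real points of `V ⊆ ℂⁿ`. -/
def realPts (V : Set (Fin n → ℂ)) : Set (Fin n → ℝ) := {x | toC n x ∈ V}

/-- The real zero set of a real polynomial. -/
def zeroSetR (g : MvPolynomial (Fin n) ℝ) : Set (Fin n → ℝ) := {x | eval x g = 0}

/-- The zero locus of the polynomials `P 1, …, P i` (the first `i` members of a tuple of
polynomials indexed from `1`). -/
def zeroLocusUpTo (P : ℕ → MvPolynomial (Fin n) ℂ) (i : ℕ) : Set (Fin n → ℂ) :=
  zeroLocus n {f | ∃ j : ℕ, 1 ≤ j ∧ j ≤ i ∧ f = P j}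

/-- `V'` is an `(n-s)`-minimal variety of the irreducible variety `V`. -/
def IsMinimalVariety (V V' : Set (Fin n → ℂ)) (s : ℕ) : Prop :=
  IsIrredVariety n V' ∧ V ⊆ V' ∧ dim n V' = n - s ∧
    ∀ f ∈ vanishingIdeal n V, f ∉ vanishingIdeal n V' →
      partialDegE n V (s + 1) ≤ (f.totalDegree : ℕ∞)

/-- `S` is `(k,b)`-free with respect to `T`, for the incidence relation `R`. -/
def KBFree {α β : Type*} (R : α → β → Prop) (S : Finset α) (T : Finset β) (k b : ℕ) : Prop :=
  ¬ ∃ (P : Finset α) (B : Finset β), P ⊆ S ∧ B ⊆ T ∧ P.card = k ∧ B.card = b ∧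
      ∀ s ∈ P, ∀ t ∈ B, R s t

/-- The number of incidences between a finite set of points and a finite family of sets. -/
def incCountAbs {α : Type*} (S : Finset α) (T : Finset (Set α)) : ℕ :=
  ∑ t ∈ T, (↑S ∩ t).ncard

/-- The number of incidences between a finite set of real points and a finite family of
subsets of `ℂⁿ`. -/
def incCount (S : Finset (Fin n → ℝ)) (T : Finset (Set (Fin n → ℂ))) : ℕ :=
  ∑ t ∈ T, (↑S ∩ toC n ⁻¹' t).ncard

/-- The total degree `deg T = ∑_{t ∈ T} deg t` of a finite family of algebraic sets. -/
def degFamily (T : Finset (Set (Fin n → ℂ))) : ℕ := ∑ t ∈ T, degreeSum n t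

/-- The total degree of a finite family of irreducible varieties. -/
def degFamilyIrred (T : Finset (Set (Fin n → ℂ))) : ℕ := ∑ t ∈ T, degree n t

/-- `α_k(d)`. -/
def alpha (k d : ℕ) : ℝ :=
  if k = 1 ∧ d = 1 then 0 else (k : ℝ) * ((d : ℝ) - 1) / ((d : ℝ) * (k : ℝ) - 1)

/-- `β_k(d)`. -/
def beta (k d : ℕ) : ℝ :=
  if k = 1 ∧ d = 1 then 1 else (d : ℝ) * ((k : ℝ) - 1) / ((d : ℝ) * (k : ℝ) - 1)

/-- `τ_d(b,k) = b^{1-β_k(d)} k^{1-α_k(d)}`. -/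
def tauC (d b k : ℕ) : ℝ := (b : ℝ) ^ (1 - beta k d) * (k : ℝ) ^ (1 - alpha k d)

/-- The Chardin–Philippon property of the constant `c₀`: for every pure-dimensional algebraic
set `W ⊆ ℂⁿ` and every `m ≥ 2 (n - dim W) δ(W)` one has `H_{I(W)}(m) ≥ c₀ m^{dim W} deg W`. -/
def ChardinPhilippon (c0 : ℝ) : Prop :=
  ∀ (W : Set (Fin n → ℂ)) (e : ℕ), IsAlgSetOfDim n W e →
    ∀ m : ℕ, 2 * (n - e) * deltaSet n W ≤ m →
      c0 * (m : ℝ) ^ e * (degreeSum n W : ℝ) ≤ (hilbert n W m : ℝ)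

/-- The defining property of the constant `c₁`: for every irreducible variety `V`, every
positive integer lies in some interval `ℛ_i(V)` with `i` admissible with respect to `V`. -/
def CoversPositiveIntegers (c0 c1 : ℝ) : Prop :=
  ∀ V : Set (Fin n → ℂ), IsIrredVariety n V →
    ∀ m : ℕ, 0 < m → ∃ i, Admissible n V i ∧ (m : ℝ) ∈ RSet n c0 c1 V i

/-- `i_V(M)`: the smallest admissible `i` such that `M^{n-i} Δ_i(V) ∈ ℛ_i(V)`. -/
def iV (c0 c1 : ℝ) (V : Set (Fin n → ℂ)) (M : ℕ) : ℕ :=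
  sInf {i | Admissible n V i ∧ (M : ℝ) ^ (n - i) * Delta n V i ∈ RSet n c0 c1 V i}

/-- A real polynomial bisects a finite set `S ⊆ ℝⁿ` if it is positive on at most half of `S`
and negative on at most half of `S`. -/
def Bisects (g : MvPolynomial (Fin n) ℝ) (S : Finset (Fin n → ℝ)) : Prop :=
  ((↑S ∩ {x | 0 < eval x g}).ncard : ℝ) ≤ (S.card : ℝ) / 2 ∧
    ((↑S ∩ {x | eval x g < 0}).ncard : ℝ) ≤ (S.card : ℝ) / 2

/-- The set of `r`-rich points of a family `T`: points lying in at least `r` members of `T`. -/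
def richPts (T : Finset (Set (Fin n → ℂ))) (r : ℕ) : Set (Fin n → ℂ) :=
  {x | r ≤ ({t | t ∈ T ∧ x ∈ t} : Set (Set (Fin n → ℂ))).ncard}

/-- A real hypersurface of degree at most `D`: the real zero set of a nonzero real polynomial
of degree at most `D`. -/
def IsRealHypersurfaceDegLE (t : Set (Fin n → ℝ)) (D : ℕ) : Prop :=
  ∃ p : MvPolynomial (Fin n) ℝ, p ≠ 0 ∧ t = zeroSetR n p ∧ p.totalDegree ≤ D

/-- Lexicographic comparison of the tuples `(f 1, …, f m)` and `(g 1, …, g m)`. -/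
def LexLE (m : ℕ) (f g : ℕ → ℕ) : Prop :=
  (∀ j ∈ Finset.Icc 1 m, f j = g j) ∨
    ∃ i ∈ Finset.Icc 1 m, (∀ j, 1 ≤ j → j < i → f j = g j) ∧ f i < g i

/-!
A prime `Q` is handled through its affine Hilbert function `H_Q`, and `δ_i(V)` through the primes
below `Q = I(V)`.

Two estimates are played against each other. Adjoining polynomials of degrees `δ_1, …, δ_m` one
after the other leads from `0` up to a prime `Q` of codimension `m`; each step costs a factor
`δ_i / T`, so `H_Q(T) ≲ T^(n-m) ∏ δ_i`. Conversely, the prime `P ≤ Q` of an `(n-s)`-minimal variety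
agrees with `Q` in all degrees below `δ_{s+1}`, so there `H_Q` grows at least like `D^(n-s)`, as a
Noether normalization of `P` shows; multiplying over `s < m` gives `δ_m^(n-m) ∏ δ_i ≲ H_Q(δ_m)`.

For `V ⊆ W` one has `H_{I(V)} ≤ H_{I(W)}`. At `D = δ_m(V)` the lower estimate for `V` and the upper
one for `W` therefore give `∏ δ_i(V) ≲ ∏ δ_i(W)`. Since `δ_i(W) ≤ δ_i(V)` for each `i`, because
`P_1, …, P_i` vanish on `W`, every factor is comparable. The degree of `W` bounds `H_{I(W)}(D)` by
`deg W · (D + 1)^(n-m)`, because a general fibre of a Noether normalization has as many points as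
the rank of the coordinate ring, and interpolation on the points of a linear section bounds
`deg W` by the upper estimate.
-/

section AffineSpan

variable {k R ι : Type*} [Field k] [CommRing R] [Algebra k R]

/-- The linear span of `1` and the family `l`; its `D`-th power consists of the values at `l` of
the polynomials of degree at most `D`. -/
def affineSpan (k : Type*) {R ι : Type*} [Field k] [CommRing R] [Algebra k R] (l : ι → R) :
    Submodule k R :=
  Submodule.span k (insert 1 (range l))

theorem one_mem_affineSpan (l : ι → R) : (1 : R) ∈ affineSpan k l :=
  Submodule.subset_span (mem_insert _ _)

theorem mem_affineSpan (l : ι → R) (i : ι) : l i ∈ affineSpan k l :=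
  Submodule.subset_span (mem_insert_of_mem _ ⟨i, rfl⟩)

theorem affineSpan_le {l : ι → R} {M : Submodule k R} :
    affineSpan k l ≤ M ↔ 1 ∈ M ∧ ∀ i, l i ∈ M := by
  simp only [affineSpan, Submodule.span_le, insert_subset_iff, range_subset_iff, SetLike.mem_coe]

theorem affineSpan_pow_mono (l : ι → R) {a b : ℕ} (hab : a ≤ b) :
    affineSpan k l ^ a ≤ affineSpan k l ^ b :=
  pow_le_pow_right₀ (Submodule.one_le.2 (one_mem_affineSpan l)) hab

theorem one_mem_affineSpan_pow (l : ι → R) (D : ℕ) : (1 : R) ∈ affineSpan k l ^ D :=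
  Submodule.one_le.1 (one_le_pow₀ (Submodule.one_le.2 (one_mem_affineSpan l)))

theorem prod_pow_mem_pow {M : Submodule k R} {l : ι → R} (hl : ∀ i, l i ∈ M) (s : Finset ι)
    (a : ι → ℕ) : ∏ i ∈ s, l i ^ a i ∈ M ^ ∑ i ∈ s, a i :=
  SetLike.prod_mem_graded (A := fun j : ℕ => M ^ j) a _ fun i _ => Submodule.pow_mem_pow _ (hl i) _

theorem affineSpan_pow_eq_map (l : ι → R) (D : ℕ) :
    affineSpan k l ^ D = (restrictTotalDegree ι k D).map (aeval l).toLinearMap := by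
  apply le_antisymm
  · induction D with
    | zero => exact Submodule.one_le.2 ⟨1, by simp [mem_restrictTotalDegree], by simp⟩
    | succ D ih =>
      rw [pow_succ, Submodule.mul_le]
      intro a ha b hb
      obtain ⟨f, hf, rfl⟩ := ih ha
      have hlin : affineSpan k l ≤ (restrictTotalDegree ι k 1).map (aeval l).toLinearMap :=
        affineSpan_le.2 ⟨⟨1, by simp [mem_restrictTotalDegree], by simp⟩,
          fun i => ⟨X i, by simp [mem_restrictTotalDegree], by simp⟩⟩
      obtain ⟨g, hg, rfl⟩ := hlin hb
      rw [SetLike.mem_coe, mem_restrictTotalDegree] at hf hg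
      exact ⟨f * g, (mem_restrictTotalDegree _ _ _).2 ((totalDegree_mul f g).trans (by gcongr)),
        by simp⟩
  · rintro x ⟨f, hf, rfl⟩
    rw [SetLike.mem_coe, mem_restrictTotalDegree] at hf
    change aeval l f ∈ _
    rw [aeval_def, eval₂_eq]
    refine Submodule.sum_mem _ fun α hα => ?_
    rw [← Algebra.smul_def]
    exact Submodule.smul_mem _ _ (affineSpan_pow_mono l ((le_totalDegree hα).trans hf)
      (prod_pow_mem_pow (mem_affineSpan l) _ α))

theorem mem_affineSpan_pow {l : ι → R} {D : ℕ} {x : R} :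
    x ∈ affineSpan k l ^ D ↔ ∃ f : MvPolynomial ι k, f.totalDegree ≤ D ∧ aeval l f = x := by
  simp only [affineSpan_pow_eq_map, Submodule.mem_map, mem_restrictTotalDegree,
    AlgHom.toLinearMap_apply]

instance [Finite ι] (l : ι → R) (D : ℕ) : FiniteDimensional k ↥(affineSpan k l ^ D) := by
  rw [affineSpan_pow_eq_map]
  infer_instance

theorem finrank_affineSpan_pow_le {e : ℕ} (y : Fin e → R) (D : ℕ) :
    Module.finrank k ↥(affineSpan k y ^ D) ≤ (D + 1) ^ e := by
  let monomials : (Fin e → Fin (D + 1)) → R := fun a => ∏ i, y i ^ (a i : ℕ)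
  have hspan : affineSpan k y ^ D ≤ Submodule.span k (range monomials) := by
    intro x hx
    obtain ⟨f, hf, rfl⟩ := mem_affineSpan_pow.1 hx
    rw [aeval_def, eval₂_eq']
    refine Submodule.sum_mem _ fun α hα => ?_
    have hα' : ∀ i, α i < D + 1 := fun i => Nat.lt_succ_of_le
      ((monomial_le_degreeOf i hα).trans ((degreeOf_le_totalDegree f i).trans hf))
    rw [← Algebra.smul_def]
    exact Submodule.smul_mem _ _ (Submodule.subset_span ⟨fun i => ⟨α i, hα' i⟩, rfl⟩)
  have := FiniteDimensional.span_of_finite k (finite_range monomials)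
  calc _ ≤ _ := Submodule.finrank_mono hspan
    _ ≤ _ := finrank_range_le_card _
    _ = (D + 1) ^ e := by simp

theorem exists_linearIndependent_totalDegree_le (k : Type*) [Field k] (e D : ℕ) :
    ∃ b : (Fin e → Fin (D + 1)) → MvPolynomial (Fin e) k,
      LinearIndependent k b ∧ ∀ a, (b a).totalDegree ≤ e * D := by
  let exponent : (Fin e → Fin (D + 1)) → Fin e →₀ ℕ :=
    fun a => Finsupp.equivFunOnFinite.symm fun i => (a i : ℕ)
  have hexponent : Function.Injective exponent := fun a b hab => funext fun i =>
    Fin.ext (congrFun (Finsupp.equivFunOnFinite.symm.injective hab) i)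
  refine ⟨fun a => monomial (exponent a) 1, ?_, fun a => ?_⟩
  · have hb := (basisMonomials (Fin e) k).linearIndependent.comp exponent hexponent
    rwa [coe_basisMonomials] at hb
  · rw [totalDegree_monomial _ one_ne_zero, Finsupp.sum_fintype _ _ fun _ => rfl]
    exact (Finset.sum_le_card_nsmul _ _ D fun i _ => Nat.lt_succ_iff.1 (a i).2).trans (by simp)

theorem aeval_mem_pow {y : ι → R} {M : Submodule k R} (hM : 1 ∈ M) (hyM : ∀ i, y i ∈ M)
    {f : MvPolynomial ι k} {D : ℕ} (hf : f.totalDegree ≤ D) : aeval y f ∈ M ^ D :=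
  pow_le_pow_left' (affineSpan_le.2 ⟨hM, hyM⟩) D (mem_affineSpan_pow.2 ⟨f, hf, rfl⟩)

theorem le_finrank_pow_of_algebraicIndependent {e : ℕ} {y : Fin e → R}
    (hy : AlgebraicIndependent k y) {M : Submodule k R} (hM : 1 ∈ M) (hyM : ∀ i, y i ∈ M) (D : ℕ)
    [FiniteDimensional k ↥(M ^ (e * D))] :
    (D + 1) ^ e ≤ Module.finrank k ↥(M ^ (e * D)) := by
  obtain ⟨b, hb, hdeg⟩ := exists_linearIndependent_totalDegree_le k e D
  have hli : LinearIndependent k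
      fun a => (⟨aeval y (b a), aeval_mem_pow hM hyM (hdeg a)⟩ : ↥(M ^ (e * D))) :=
    .of_comp (M ^ (e * D)).subtype (hb.map' (aeval y).toLinearMap (LinearMap.ker_eq_bot.2 hy))
  simpa using hli.fintype_card_le_finrank

end AffineSpan

section NoetherNormalization

variable {k R : Type*} [Field k] [CommRing R] [Algebra k R]

/-- A linear Noether normalization of the algebra generated by `l`: algebraically independent
elements `y` of the affine span of `l` over which the algebra is finite. Finiteness is recorded
with its effect on degrees: each element of degree `D` is a combination of boundedly many
elements, with coefficients polynomials in `y` of degree at most `D`. -/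
structure IsNoetherNormalization (k : Type*) {R ι κ : Type*} [Field k] [CommRing R] [Algebra k R]
    (l : ι → R) (y : κ → R) : Prop where
  mem : ∀ i, y i ∈ affineSpan k l
  algebraicIndependent : AlgebraicIndependent k y
  exists_pow_le : ∃ c, ∀ D, affineSpan k l ^ D ≤ affineSpan k y ^ D * affineSpan k l ^ c

theorem prod_sub_smul_pow_mem {ι : Type*} {u : ι → R} {b : ι → k} {w : R} {L' L : Submodule k R}
    (hu : ∀ i, u i ∈ L) (hw : w ∈ L) (hub : ∀ i, u i - b i • w ∈ L') (s : Multiset ι) :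
    (s.map u).prod ∈ L ^ s.card ∧
      (s.map u).prod - (s.map b).prod • w ^ s.card ∈ L' * L ^ (s.card - 1) := by
  induction s using Multiset.induction_on with
  | empty => simp [Submodule.one_le.1 le_rfl]
  | cons i s ih =>
    simp only [Multiset.map_cons, Multiset.prod_cons, Multiset.card_cons, Nat.add_sub_cancel]
    refine ⟨pow_succ' L _ ▸ Submodule.mul_mem_mul (hu i) ih.1, ?_⟩
    have hsplit : u i * (s.map u).prod - (b i * (s.map b).prod) • w ^ (s.card + 1) =
        (u i - b i • w) * (s.map u).prod +
          b i • (w * ((s.map u).prod - (s.map b).prod • w ^ s.card)) := by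
      simp only [Algebra.smul_def, map_mul]
      ring
    rw [hsplit]
    refine Submodule.add_mem _ (Submodule.mul_mem_mul (hub i) ih.1) (Submodule.smul_mem _ _ ?_)
    obtain rfl | hs := eq_or_ne s 0
    · simp
    · rw [← mul_pow_sub_one (Multiset.card_eq_zero.not.2 hs), mul_left_comm]
      exact Submodule.mul_mem_mul hw ih.2

theorem prod_map_toMultiset {ι A : Type*} [CommMonoid A] (v : ι → A) (α : ι →₀ ℕ) :
    (α.toMultiset.map v).prod = α.prod fun i j => v i ^ j := by
  rw [Finsupp.toMultiset_map, Finsupp.prod_toMultiset,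
    Finsupp.prod_mapDomain_index (fun _ => pow_zero _) fun _ _ _ => pow_add _ _ _]

theorem aeval_sub_smul_pow_mem {ι : Type*} {u : ι → R} {b : ι → k} {w : R} {L' L : Submodule k R}
    (hu : ∀ i, u i ∈ L) (hw : w ∈ L) (h1 : 1 ∈ L') (hL : L' ≤ L) (hub : ∀ i, u i - b i • w ∈ L')
    {g : MvPolynomial ι k} {d : ℕ} (hd : 0 < d) (hg : g.totalDegree ≤ d) :
    aeval u g - eval b (homogeneousComponent d g) • w ^ d ∈ L' * L ^ (d - 1) := by
  have monomial_case (α : ι →₀ ℕ) (hα : α.degree ≤ d) (a : k) :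
      aeval u (monomial α a) - eval b (homogeneousComponent d (monomial α a)) • w ^ d ∈
        L' * L ^ (d - 1) := by
    obtain ⟨hprod, hsub⟩ := prod_sub_smul_pow_mem hu hw hub (Finsupp.toMultiset α)
    have hcard : (Finsupp.toMultiset α).card = α.degree := Finsupp.card_toMultiset α
    rw [hcard, prod_map_toMultiset, prod_map_toMultiset] at hsub
    rw [hcard, prod_map_toMultiset] at hprod
    rw [aeval_monomial, ← Algebra.smul_def,
      homogeneousComponent_of_mem (isHomogeneous_monomial a rfl)]
    split_ifs with hdeg
    · rw [eval_monomial, mul_smul, ← smul_sub, hdeg]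
      exact Submodule.smul_mem _ _ hsub
    · rw [map_zero, zero_smul, sub_zero]
      refine Submodule.smul_mem _ _ ?_
      have hle : L ^ α.degree ≤ 1 * L ^ (d - 1) := by
        rw [one_mul]
        exact pow_le_pow_right₀ (Submodule.one_le.2 (hL h1)) (by omega)
      exact mul_le_mul_left (Submodule.one_le.2 h1) _ (hle hprod)
  have hsum : aeval u g - eval b (homogeneousComponent d g) • w ^ d =
      ∑ α ∈ g.support, (aeval u (monomial α (coeff α g)) -
        eval b (homogeneousComponent d (monomial α (coeff α g))) • w ^ d) := by
    conv_lhs => rw [g.as_sum]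
    simp only [map_sum, Finset.sum_smul, Finset.sum_sub_distrib]
  rw [hsum]
  exact Submodule.sum_mem _ fun α hα => monomial_case α ((le_totalDegree hα).trans hg) _

theorem pow_le_pow_mul_of_pow_mem {L' L : Submodule k R} {w : R} (h1 : 1 ∈ L) (hwL : w ∈ L)
    (hL : L ≤ L' ⊔ k ∙ w) {d : ℕ} (hd : 0 < d) (hw : w ^ d ∈ L' * L ^ (d - 1)) (D : ℕ) :
    L ^ D ≤ L' ^ D * L ^ (d - 1) := by
  have hsucc (j : ℕ) : L ^ (j + 1) ≤ L' * L ^ j ⊔ k ∙ w ^ (j + 1) := by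
    induction j with
    | zero => simpa using hL
    | succ j ih =>
      have hw_mul : (k ∙ w) * L ^ (j + 1) ≤ L' * L ^ (j + 1) ⊔ k ∙ w ^ (j + 2) := calc
        (k ∙ w) * L ^ (j + 1) ≤ (k ∙ w) * (L' * L ^ j ⊔ k ∙ w ^ (j + 1)) := by gcongr
        _ = L' * ((k ∙ w) * L ^ j) ⊔ k ∙ w ^ (j + 2) := by
          rw [Submodule.mul_sup, Submodule.span_mul_span, singleton_mul_singleton, ← pow_succ',
            mul_left_comm]
        _ ≤ L' * (L * L ^ j) ⊔ k ∙ w ^ (j + 2) := by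
          gcongr
          rwa [Submodule.span_singleton_le_iff_mem]
        _ = _ := by rw [← pow_succ']
      calc L ^ (j + 2) ≤ (L' ⊔ k ∙ w) * L ^ (j + 1) := by
            rw [pow_succ']
            gcongr
        _ ≤ L' * L ^ (j + 1) ⊔ k ∙ w ^ (j + 2) := by
          rw [Submodule.sup_mul]
          exact sup_le le_sup_left hw_mul
  have hLd : L ^ d ≤ L' * L ^ (d - 1) := by
    obtain ⟨j, rfl⟩ := Nat.exists_eq_succ_of_ne_zero hd.ne'
    exact (hsucc j).trans (sup_le le_rfl ((Submodule.span_singleton_le_iff_mem _ _).2 hw))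
  have hshift : L ^ (D + (d - 1)) ≤ L' ^ D * L ^ (d - 1) := by
    induction D with
    | zero => simp
    | succ D ih =>
      calc L ^ (D + 1 + (d - 1)) = L ^ d * L ^ D := by rw [← pow_add]; congr 1; omega
        _ ≤ L' * L ^ (d - 1) * L ^ D := by gcongr
        _ = L' * L ^ (D + (d - 1)) := by rw [mul_assoc, ← pow_add, add_comm]
        _ ≤ L' * (L' ^ D * L ^ (d - 1)) := by gcongr
        _ = L' ^ (D + 1) * L ^ (d - 1) := by rw [← mul_assoc, ← pow_succ']
  exact (pow_le_pow_right₀ (Submodule.one_le.2 h1) (Nat.le_add_right _ _)).trans hshift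

theorem homogeneousComponent_totalDegree_ne_zero {ι : Type*} {g : MvPolynomial ι k} (hg : g ≠ 0) :
    homogeneousComponent g.totalDegree g ≠ 0 := by
  obtain ⟨α, hα, hdeg⟩ := Finset.exists_mem_eq_sup g.support (support_nonempty.2 hg)
    fun s => s.sum fun _ e => e
  intro h
  have hcoeff := congrArg (coeff α) h
  rw [coeff_homogeneousComponent, if_pos (show α.degree = g.totalDegree from hdeg.symm),
    coeff_zero] at hcoeff
  exact mem_support_iff.1 hα hcoeff

theorem totalDegree_pos_of_aeval_eq_zero [Nontrivial R] {ι : Type*} {l : ι → R}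
    {g : MvPolynomial ι k} (hg : g ≠ 0) (h : aeval l g = 0) : 0 < g.totalDegree := by
  refine Nat.pos_of_ne_zero fun hdeg => hg ?_
  rw [totalDegree_eq_zero_iff_eq_C] at hdeg
  rw [hdeg, aeval_C, map_eq_zero] at h
  rw [hdeg, h, map_zero]

theorem exists_eval_homogeneousComponent_ne_zero [Infinite k] {ι : Type*} {g : MvPolynomial ι k}
    (hg : 0 < g.totalDegree) :
    ∃ b : ι → k, eval b (homogeneousComponent g.totalDegree g) ≠ 0 ∧ ∃ j, b j ≠ 0 := by
  have hg0 : g ≠ 0 := by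
    rintro rfl
    simp at hg
  obtain ⟨b, hb⟩ : ∃ b, eval b (homogeneousComponent g.totalDegree g) ≠ 0 := by
    by_contra! h
    exact homogeneousComponent_totalDegree_ne_zero hg0
      (MvPolynomial.funext fun x => by rw [h x, map_zero])
  refine ⟨b, hb, ?_⟩
  by_contra! hb0
  obtain rfl : b = 0 := _root_.funext hb0
  rw [eval_zero, constantCoeff_eq] at hb
  exact hb ((homogeneousComponent_isHomogeneous _ g).coeff_eq_zero (by simpa using hg.ne))

theorem exists_affineSpan_pow_le [Infinite k] [Nontrivial R] {N : ℕ} {l : Fin (N + 1) → R}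
    (hl : ¬ AlgebraicIndependent k l) :
    ∃ z : Fin N → R, affineSpan k z ≤ affineSpan k l ∧
      ∃ c, ∀ D, affineSpan k l ^ D ≤ affineSpan k z ^ D * affineSpan k l ^ c := by
  obtain ⟨g, hg, hg0⟩ : ∃ g : MvPolynomial (Fin (N + 1)) k, aeval l g = 0 ∧ g ≠ 0 := by
    simpa [algebraicIndependent_iff] using hl
  have hdeg := totalDegree_pos_of_aeval_eq_zero hg0 hg
  obtain ⟨b, hb, j, hj⟩ := exists_eval_homogeneousComponent_ne_zero hdeg
  set w : R := (b j)⁻¹ • l j with hw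
  let z : Fin N → R := fun i => l (j.succAbove i) - b (j.succAbove i) • w
  have hwl : w ∈ affineSpan k l := Submodule.smul_mem _ _ (mem_affineSpan l j)
  have hzl : affineSpan k z ≤ affineSpan k l := affineSpan_le.2 ⟨one_mem_affineSpan l,
    fun i => Submodule.sub_mem _ (mem_affineSpan l _) (Submodule.smul_mem _ _ hwl)⟩
  have hlb (i) : l i - b i • w ∈ affineSpan k z := by
    obtain rfl | h := eq_or_ne i j
    · rw [hw, smul_smul, mul_inv_cancel₀ hj, one_smul, sub_self]
      exact Submodule.zero_mem _
    · obtain ⟨i, rfl⟩ := Fin.exists_succAbove_eq h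
      exact mem_affineSpan z i
  have hlz : affineSpan k l ≤ affineSpan k z ⊔ k ∙ w :=
    affineSpan_le.2 ⟨Submodule.mem_sup_left (one_mem_affineSpan z), fun i => by
      simpa using Submodule.add_mem_sup (hlb i)
        (Submodule.smul_mem _ (b i) (Submodule.mem_span_singleton_self w))⟩
  have hpow := aeval_sub_smul_pow_mem (mem_affineSpan l) hwl (one_mem_affineSpan z) hzl hlb hdeg
    le_rfl
  rw [hg, zero_sub, Submodule.neg_mem_iff, Submodule.smul_mem_iff _ hb] at hpow
  exact ⟨z, hzl, _, pow_le_pow_mul_of_pow_mem (one_mem_affineSpan l) hwl hlz hdeg hpow⟩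

theorem exists_isNoetherNormalization [Infinite k] [Nontrivial R] {N : ℕ} (l : Fin N → R) :
    ∃ e ≤ N, ∃ y : Fin e → R, IsNoetherNormalization k l y := by
  induction N with
  | zero =>
    refine ⟨0, le_rfl, l, mem_affineSpan l, ?_, 0, by simp⟩
    rw [algebraicIndependent_empty_type_iff]
    exact FaithfulSMul.algebraMap_injective k R
  | succ N ih =>
    by_cases hl : AlgebraicIndependent k l
    · exact ⟨N + 1, le_rfl, l, mem_affineSpan l, hl, 0, by simp⟩
    obtain ⟨z, hzl, c, hc⟩ := exists_affineSpan_pow_le hl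
    obtain ⟨e, he, y, hyz, hy, c', hc'⟩ := ih z
    refine ⟨e, by omega, y, fun i => hzl (hyz i), hy, c' + c, fun D => ?_⟩
    calc affineSpan k l ^ D ≤ affineSpan k z ^ D * affineSpan k l ^ c := hc D
      _ ≤ affineSpan k y ^ D * affineSpan k z ^ c' * affineSpan k l ^ c := by gcongr; exact hc' D
      _ ≤ affineSpan k y ^ D * affineSpan k l ^ c' * affineSpan k l ^ c := by gcongr
      _ = _ := by rw [mul_assoc, ← pow_add]

end NoetherNormalization

section HilbertFunction

variable {σ k : Type*} [Field k] {J J' : Ideal (MvPolynomial σ k)}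

/-- The classes of the variables in the coordinate ring of `J`. -/
def quotientVars (J : Ideal (MvPolynomial σ k)) : σ → MvPolynomial σ k ⧸ J :=
  fun i => Ideal.Quotient.mk J (X i)

/-- The affine Hilbert function of the ideal `J`: the dimension of the space of residue classes
of polynomials of degree at most `D`. -/
def hilbertFunction (J : Ideal (MvPolynomial σ k)) (D : ℕ) : ℕ :=
  Module.finrank k ↥(affineSpan k (quotientVars J) ^ D)

theorem aeval_quotientVars (f : MvPolynomial σ k) :
    aeval (quotientVars J) f = Ideal.Quotient.mk J f :=
  DFunLike.congr_fun (algHom_ext (f := aeval (quotientVars J)) (g := Ideal.Quotient.mkₐ k J)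
    fun i => by simp [quotientVars]) f

theorem mem_affineSpan_quotientVars_pow {D : ℕ} {x : MvPolynomial σ k ⧸ J} :
    x ∈ affineSpan k (quotientVars J) ^ D ↔
      ∃ f : MvPolynomial σ k, f.totalDegree ≤ D ∧ Ideal.Quotient.mk J f = x := by
  simp only [mem_affineSpan_pow, aeval_quotientVars]

theorem map_factorₐ_affineSpan_pow (h : J ≤ J') (D : ℕ) :
    (affineSpan k (quotientVars J) ^ D).map (Ideal.Quotient.factorₐ k h).toLinearMap =
      affineSpan k (quotientVars J') ^ D := by
  ext x
  simp only [Submodule.mem_map, mem_affineSpan_quotientVars_pow]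
  constructor
  · rintro ⟨_, ⟨f, hf, rfl⟩, rfl⟩
    exact ⟨f, hf, rfl⟩
  · rintro ⟨f, hf, rfl⟩
    exact ⟨_, ⟨f, hf, rfl⟩, rfl⟩

theorem hilbertFunction_mono [Finite σ] (J : Ideal (MvPolynomial σ k)) :
    Monotone (hilbertFunction J) :=
  fun _ _ h => Submodule.finrank_mono (affineSpan_pow_mono _ h)

theorem hilbertFunction_anti [Finite σ] (h : J ≤ J') (D : ℕ) :
    hilbertFunction J' D ≤ hilbertFunction J D := by
  unfold hilbertFunction
  rw [← map_factorₐ_affineSpan_pow h]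
  exact Submodule.finrank_map_le _ _

theorem hilbertFunction_eq_of_mem [Finite σ] (h : J ≤ J') {D : ℕ}
    (hD : ∀ f ∈ J', f.totalDegree ≤ D → f ∈ J) : hilbertFunction J D = hilbertFunction J' D := by
  unfold hilbertFunction
  rw [← map_factorₐ_affineSpan_pow h, ← LinearMap.range_domRestrict,
    LinearMap.finrank_range_of_inj]
  rw [injective_iff_map_eq_zero]
  rintro ⟨x, hx⟩ hx0
  obtain ⟨f, hf, rfl⟩ := mem_affineSpan_quotientVars_pow.1 hx
  exact Subtype.ext (Ideal.Quotient.eq_zero_iff_mem.2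
    (hD f (Ideal.Quotient.eq_zero_iff_mem.1 hx0) hf))

theorem hilbertFunction_add_le [Finite σ] (h : J ≤ J') {g : MvPolynomial σ k} {δ : ℕ}
    (hgJ : ∀ f, f * g ∈ J → f ∈ J) (hgJ' : g ∈ J') (hδ : g.totalDegree ≤ δ) (D : ℕ) :
    hilbertFunction J D + hilbertFunction J' (D + δ) ≤ hilbertFunction J (D + δ) := by
  let restrict := (Ideal.Quotient.factorₐ k h).toLinearMap.domRestrict
    (affineSpan k (quotientVars J) ^ (D + δ))
  have hrange : Module.finrank k (LinearMap.range restrict) = hilbertFunction J' (D + δ) := by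
    rw [LinearMap.range_domRestrict, map_factorₐ_affineSpan_pow, hilbertFunction]
  have hker : hilbertFunction J D ≤ Module.finrank k (LinearMap.ker restrict) := by
    have hmul : ∀ x ∈ affineSpan k (quotientVars J) ^ D,
        Ideal.Quotient.mk J g * x ∈ affineSpan k (quotientVars J) ^ (D + δ) := by
      intro x hx
      obtain ⟨f, hf, rfl⟩ := mem_affineSpan_quotientVars_pow.1 hx
      exact mem_affineSpan_quotientVars_pow.2
        ⟨g * f, (totalDegree_mul _ _).trans (by omega), map_mul _ _ _⟩
    let mul_g := ((LinearMap.mulLeft k (Ideal.Quotient.mk J g)).restrict hmul).codRestrict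
      (LinearMap.ker restrict) fun x => by
        change Ideal.Quotient.factorₐ k h (Ideal.Quotient.mk J g * x) = 0
        rw [map_mul, Ideal.Quotient.factorₐ_apply_mk, Ideal.Quotient.eq_zero_iff_mem.2 hgJ',
          zero_mul]
    refine LinearMap.finrank_le_finrank_of_injective (f := mul_g) ?_
    rw [injective_iff_map_eq_zero]
    rintro ⟨x, hx⟩ hx0
    obtain ⟨f, -, rfl⟩ := mem_affineSpan_quotientVars_pow.1 hx
    have hfg : Ideal.Quotient.mk J (f * g) = 0 := by
      rw [mul_comm, map_mul]
      exact congrArg (fun z => z.1.1) hx0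
    exact Subtype.ext (Ideal.Quotient.eq_zero_iff_mem.2
      (hgJ f (Ideal.Quotient.eq_zero_iff_mem.1 hfg)))
  have hrank := LinearMap.finrank_range_add_finrank_ker restrict
  rw [hrange] at hrank
  unfold hilbertFunction at hker hrank ⊢
  omega

theorem succ_mul_hilbertFunction_le [Finite σ] (h : J ≤ J') {g : MvPolynomial σ k} {δ : ℕ}
    (hgJ : ∀ f, f * g ∈ J → f ∈ J) (hgJ' : g ∈ J') (hδ : g.totalDegree ≤ δ) (D K : ℕ) :
    (K + 1) * hilbertFunction J' D ≤ hilbertFunction J (D + K * δ) := by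
  induction K with
  | zero => simpa using hilbertFunction_anti h D
  | succ K ih =>
    calc (K + 1 + 1) * hilbertFunction J' D
        = (K + 1) * hilbertFunction J' D + hilbertFunction J' D := by ring
      _ ≤ hilbertFunction J (D + K * δ) + hilbertFunction J' (D + K * δ + δ) := by
        gcongr
        exact hilbertFunction_mono J' (by omega)
      _ ≤ hilbertFunction J (D + K * δ + δ) := hilbertFunction_add_le h hgJ hgJ' hδ _
      _ = _ := by ring_nf

theorem mul_hilbertFunction_le [Finite σ] (h : J ≤ J') {g : MvPolynomial σ k} {δ : ℕ}
    (hgJ : ∀ f, f * g ∈ J → f ∈ J) (hgJ' : g ∈ J') (hδ : g.totalDegree ≤ δ) (hpos : 0 < δ)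
    (D T : ℕ) : T * hilbertFunction J' D ≤ δ * hilbertFunction J (D + T) :=
  calc T * hilbertFunction J' D ≤ δ * (T / δ + 1) * hilbertFunction J' D := by
        gcongr
        exact (Nat.lt_mul_div_succ T hpos).le
    _ = δ * ((T / δ + 1) * hilbertFunction J' D) := mul_assoc _ _ _
    _ ≤ δ * hilbertFunction J (D + T / δ * δ) := by
        gcongr
        exact succ_mul_hilbertFunction_le h hgJ hgJ' hδ D _
    _ ≤ δ * hilbertFunction J (D + T) := by
        gcongr
        exact hilbertFunction_mono J (Nat.add_le_add_left (Nat.div_mul_le_self T δ) D)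

end HilbertFunction

section Dimension

variable {k R : Type*} [Field k] [CommRing R] [Algebra k R]

theorem finrank_mul_le (M N : Submodule k R) [FiniteDimensional k M] [FiniteDimensional k N] :
    Module.finrank k ↥(M * N) ≤ Module.finrank k M * Module.finrank k N := by
  rw [← Submodule.mulMap_range, ← Module.finrank_tensorProduct]
  exact LinearMap.finrank_range_le _

theorem le_of_succ_pow_le_mul_succ_pow {a b C : ℕ}
    (h : ∀ D, (D + 1) ^ a ≤ C * (D + 1) ^ b) : a ≤ b := by
  by_contra! hab
  have hlt : C * (C + 1) ^ b < (C + 1) ^ (b + 1) := by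
    rw [pow_succ']
    gcongr
    omega
  exact absurd (h C) (hlt.trans_le (Nat.pow_le_pow_right (by omega) hab)).not_ge

theorem mul_add_one_pow_le (c D e : ℕ) : (c * D + 1) ^ e ≤ (c + 1) ^ e * (D + 1) ^ e := by
  rw [← mul_pow]
  exact Nat.pow_le_pow_left (by nlinarith) _

theorem IsNoetherNormalization.exists_finrank_le {ι : Type*} [Finite ι] {l : ι → R} {e : ℕ}
    {y : Fin e → R} (h : IsNoetherNormalization k l y) :
    ∃ C, ∀ D, Module.finrank k ↥(affineSpan k l ^ D) ≤ C * (D + 1) ^ e := by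
  obtain ⟨c, hc⟩ := h.exists_pow_le
  refine ⟨Module.finrank k ↥(affineSpan k l ^ c), fun D => ?_⟩
  have : FiniteDimensional k ↥(affineSpan k y ^ D * affineSpan k l ^ c) := by
    rw [← Submodule.mulMap_range]
    infer_instance
  calc _ ≤ _ := Submodule.finrank_mono (hc D)
    _ ≤ _ := finrank_mul_le _ _
    _ ≤ (D + 1) ^ e * _ := Nat.mul_le_mul_right _ (finrank_affineSpan_pow_le y D)
    _ = _ := mul_comm _ _

theorem IsNoetherNormalization.le_of_algebraicIndependent {ι : Type*} [Finite ι] {l : ι → R}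
    {e e' : ℕ} {y : Fin e → R} (h : IsNoetherNormalization k l y) {z : Fin e' → R}
    (hz : AlgebraicIndependent k z) (hzl : ∀ i, z i ∈ affineSpan k l) : e' ≤ e := by
  obtain ⟨C, hC⟩ := h.exists_finrank_le
  refine le_of_succ_pow_le_mul_succ_pow (C := C * (e' + 1) ^ e) fun D => ?_
  calc _ ≤ _ := le_finrank_pow_of_algebraicIndependent hz (one_mem_affineSpan l) hzl D
    _ ≤ _ := hC _
    _ ≤ C * ((e' + 1) ^ e * (D + 1) ^ e) := Nat.mul_le_mul_left _ (mul_add_one_pow_le _ _ _)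
    _ = _ := (mul_assoc _ _ _).symm

theorem IsNoetherNormalization.finite {ι : Type*} [Finite ι] {l : ι → R} {e : ℕ} {y : Fin e → R}
    (h : IsNoetherNormalization k l y)
    (hl : Function.Surjective (aeval l : MvPolynomial ι k →ₐ[k] R)) :
    (aeval y : MvPolynomial (Fin e) k →ₐ[k] R).toRingHom.Finite := by
  let _ := (aeval y : MvPolynomial (Fin e) k →ₐ[k] R).toRingHom.toAlgebra
  have : IsScalarTower k (MvPolynomial (Fin e) k) R :=
    IsScalarTower.of_algebraMap_eq' (aeval y : MvPolynomial (Fin e) k →ₐ[k] R).comp_algebraMap.symm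
  obtain ⟨c, hc⟩ := h.exists_pow_le
  obtain ⟨s, hs⟩ := (Submodule.fg_iff_finiteDimensional (affineSpan k l ^ c)).2 inferInstance
  refine ⟨⟨s, eq_top_iff.2 fun x _ => ?_⟩⟩
  obtain ⟨f, rfl⟩ := hl x
  refine Submodule.mul_induction_on (hc _ (mem_affineSpan_pow.2 ⟨f, le_rfl, rfl⟩)) ?_
    fun _ _ => Submodule.add_mem _
  intro a ha b hb
  obtain ⟨g, -, rfl⟩ := mem_affineSpan_pow.1 ha
  rw [← hs] at hb
  exact Submodule.smul_mem _ g (Submodule.span_subset_span k _ _ hb)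

variable {σ : Type*} {Q Q' : Ideal (MvPolynomial σ k)}

/-- The coordinate ring of `Q` has dimension `e`, witnessed by a linear Noether normalization by
`e` elements. -/
def HasDim (Q : Ideal (MvPolynomial σ k)) (e : ℕ) : Prop :=
  ∃ y : Fin e → MvPolynomial σ k ⧸ Q, IsNoetherNormalization k (quotientVars Q) y

theorem exists_hasDim [Infinite k] {n : ℕ} (Q : Ideal (MvPolynomial (Fin n) k)) [Q.IsPrime] :
    ∃ e ≤ n, HasDim Q e :=
  exists_isNoetherNormalization _

theorem aeval_quotientVars_surjective (Q : Ideal (MvPolynomial σ k)) :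
    Function.Surjective (aeval (quotientVars Q) : MvPolynomial σ k →ₐ[k] MvPolynomial σ k ⧸ Q) :=
  fun x => by
    obtain ⟨f, rfl⟩ := Ideal.Quotient.mk_surjective x
    exact ⟨f, aeval_quotientVars f⟩

theorem HasDim.exists_hilbertFunction_le [Finite σ] {e : ℕ} (h : HasDim Q e) :
    ∃ C, ∀ D, hilbertFunction Q D ≤ C * (D + 1) ^ e :=
  h.choose_spec.exists_finrank_le

theorem HasDim.succ_pow_le_hilbertFunction [Finite σ] {e : ℕ} (h : HasDim Q e) (D : ℕ) :
    (D + 1) ^ e ≤ hilbertFunction Q (e * D) :=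
  let ⟨_, hy⟩ := h
  le_finrank_pow_of_algebraicIndependent hy.algebraicIndependent (one_mem_affineSpan _) hy.mem D

theorem HasDim.unique [Finite σ] {e e' : ℕ} (h : HasDim Q e) (h' : HasDim Q e') : e = e' :=
  let ⟨_, hy⟩ := h
  let ⟨_, hy'⟩ := h'
  le_antisymm (hy'.le_of_algebraicIndependent hy.algebraicIndependent hy.mem)
    (hy.le_of_algebraicIndependent hy'.algebraicIndependent hy'.mem)

theorem HasDim.lt [Finite σ] [hQ : Q.IsPrime] {e e' : ℕ} (h : HasDim Q e) (h' : HasDim Q' e')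
    (hlt : Q < Q') : e' < e := by
  obtain ⟨hle, g, hgQ', hgQ⟩ := SetLike.lt_iff_le_and_exists.1 hlt
  obtain ⟨C, hC⟩ := h.exists_hilbertFunction_le
  set c := e' + g.totalDegree with hc
  refine le_of_succ_pow_le_mul_succ_pow (a := e' + 1) (C := C * (c + 1) ^ e) fun D => ?_
  calc (D + 1) ^ (e' + 1) = (D + 1) * (D + 1) ^ e' := pow_succ' _ _
    _ ≤ (D + 1) * hilbertFunction Q' (e' * D) := by
      gcongr
      exact h'.succ_pow_le_hilbertFunction D
    _ ≤ hilbertFunction Q (e' * D + D * g.totalDegree) :=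
      succ_mul_hilbertFunction_le hle (fun f hf => (hQ.mem_or_mem hf).resolve_right hgQ) hgQ'
        le_rfl _ _
    _ = hilbertFunction Q (c * D) := by rw [hc]; ring_nf
    _ ≤ C * ((c + 1) ^ e * (D + 1) ^ e) :=
      (hC _).trans (Nat.mul_le_mul_left _ (mul_add_one_pow_le _ _ _))
    _ = _ := (mul_assoc _ _ _).symm

theorem HasDim.anti [Finite σ] [Q.IsPrime] {e e' : ℕ} (h : HasDim Q e) (h' : HasDim Q' e')
    (hle : Q ≤ Q') : e' ≤ e := by
  obtain rfl | hlt := eq_or_lt_of_le hle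
  · exact (h'.unique h).le
  · exact (h.lt h' hlt).le

end Dimension

section Krull

theorem eq_bot_or_eq_span_prime_of_height_le_one {A : Type*} [CommRing A] [IsDomain A]
    [UniqueFactorizationMonoid A] {p : Ideal A} [hp : p.IsPrime] (h : p.height ≤ 1) :
    p = ⊥ ∨ ∃ f, Prime f ∧ p = Ideal.span {f} := by
  obtain h0 | h1 := Order.le_one_iff.1 h
  · rw [Ideal.height_eq_zero_iff, IsDomain.minimalPrimes_eq_singleton_bot] at h0
    exact Or.inl h0
  · have hbot := p.ne_bot_of_height_eq_one h1
    obtain ⟨f, hfp, hf⟩ := hp.exists_mem_prime_of_ne_bot hbot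
    exact Or.inr ⟨f, hf, p.eq_span_singleton_of_height_eq_one h1 hfp hf⟩

variable {k : Type*} [Field k]

theorem degreeOf_ne_zero_iff_mem_vars {σ : Type*} {f : MvPolynomial σ k} {j : σ} :
    degreeOf j f ≠ 0 ↔ j ∈ f.vars := by
  classical
  rw [vars_def, Multiset.mem_toFinset, degreeOf_def, Multiset.count_ne_zero]

theorem exists_degreeOf_ne_zero_of_prime {σ : Type*} {f : MvPolynomial σ k} (hf : Prime f) :
    ∃ j, degreeOf j f ≠ 0 := by
  by_contra! h
  have hvars : f.vars = ∅ :=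
    Finset.eq_empty_of_forall_notMem fun j hj => degreeOf_ne_zero_iff_mem_vars.2 hj (h j)
  obtain ⟨a, rfl⟩ : ∃ a, f = C a := ⟨_, vars_eq_empty_iff_eq_C.1 hvars⟩
  have ha : a ≠ 0 := by
    rintro rfl
    exact hf.ne_zero (map_zero _)
  exact hf.not_isUnit ((isUnit_iff_ne_zero.2 ha).map C)

theorem exists_rename_mem_imp_eq_zero {e : ℕ} {p : Ideal (MvPolynomial (Fin e) k)} [p.IsPrime]
    (hp : p.height ≤ 1) :
    ∃ m, e ≤ m + 1 ∧ ∃ z : Fin m → Fin e, ∀ g, rename z g ∈ p → g = 0 := by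
  obtain rfl | ⟨f, hf, rfl⟩ := eq_bot_or_eq_span_prime_of_height_le_one hp
  · exact ⟨e, by omega, id, fun g hg => by simpa using hg⟩
  obtain ⟨j, hj⟩ := exists_degreeOf_ne_zero_of_prime hf
  obtain ⟨m, rfl⟩ : ∃ m, e = m + 1 := ⟨e - 1, by have := j.2; omega⟩
  refine ⟨m, le_rfl, j.succAbove, fun g hg => ?_⟩
  obtain ⟨u, hu⟩ := Ideal.mem_span_singleton.1 hg
  by_contra hg0
  have hrename : rename j.succAbove g ≠ 0 :=
    (map_ne_zero_iff _ (rename_injective _ Fin.succAbove_right_injective)).2 hg0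
  have hu0 : u ≠ 0 := by
    rintro rfl
    exact hrename (by rw [hu, mul_zero])
  have hvars : j ∈ (rename j.succAbove g).vars := by
    rw [← degreeOf_ne_zero_iff_mem_vars, hu, degreeOf_mul_eq hf.ne_zero hu0]
    omega
  simpa using vars_rename _ _ hvars

theorem exists_algebraicIndependent_comp {R B : Type*} [CommRing R] [IsDomain R]
    [IsNoetherianRing R] [Algebra k R] [CommRing B] [IsDomain B] [Algebra k B] {e : ℕ}
    {y : Fin e → R} (hy : AlgebraicIndependent k y)
    (hI : (aeval y : MvPolynomial (Fin e) k →ₐ[k] R).toRingHom.IsIntegral) (φ : R →ₐ[k] B)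
    (hφ : (RingHom.ker φ).height ≤ 1) :
    ∃ m, e ≤ m + 1 ∧ ∃ z : Fin m → Fin e, AlgebraicIndependent k fun i => φ (y (z i)) := by
  let _ := (aeval y : MvPolynomial (Fin e) k →ₐ[k] R).toRingHom.toAlgebra
  have : Algebra.IsIntegral (MvPolynomial (Fin e) k) R := ⟨hI⟩
  have : FaithfulSMul (MvPolynomial (Fin e) k) R :=
    (faithfulSMul_iff_algebraMap_injective _ _).2 hy
  have hprime : (RingHom.ker φ).IsPrime := RingHom.ker_isPrime φ
  -- Going down for integral extensions of the normal domain `k[y]`.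
  have hheight : ((RingHom.ker φ).under (MvPolynomial (Fin e) k)).height ≤ 1 := by
    refine le_trans ?_ hφ
    rw [Ideal.height_eq_height_add_of_liesOver_of_hasGoingDown
      ((RingHom.ker φ).under (MvPolynomial (Fin e) k)) (RingHom.ker φ)]
    exact le_self_add
  obtain ⟨m, hm, z, hz⟩ := exists_rename_mem_imp_eq_zero hheight
  refine ⟨m, hm, z, (injective_iff_map_eq_zero _).2 fun g hg => hz g ?_⟩
  change φ (aeval y (rename z g)) = 0
  rw [aeval_rename, ← hg]
  exact comp_aeval_apply (y ∘ z) φ g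

variable {σ : Type*} [Finite σ]

theorem HasDim.add_one_eq_of_mem_minimalPrimes {Q Q' : Ideal (MvPolynomial σ k)} [hQ' : Q'.IsPrime]
    {g : MvPolynomial σ k} (hg : g ∉ Q') (hQ : Q ∈ (Q' ⊔ Ideal.span {g}).minimalPrimes)
    {e e' : ℕ} (h : HasDim Q e) (h' : HasDim Q' e') : e + 1 = e' := by
  have := hQ.isPrime
  have hle : Q' ≤ Q := le_sup_left.trans hQ.le
  have hgQ : g ∈ Q := hQ.le (Ideal.mem_sup_right (Ideal.mem_span_singleton_self g))
  have hlt := h'.lt h (lt_of_le_of_ne hle (by rintro rfl; exact hg hgQ))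
  obtain ⟨x, hx⟩ := h
  obtain ⟨y, hy⟩ := h'
  have hheight : (RingHom.ker (Ideal.Quotient.factorₐ k hle)).height ≤ 1 := by
    change (RingHom.ker (Ideal.Quotient.factor hle)).height ≤ 1
    rw [Ideal.Quotient.factor_ker]
    exact Ideal.map_height_le_one_of_mem_minimalPrimes hQ
  obtain ⟨m, hm, z, hz⟩ := exists_algebraicIndependent_comp hy.algebraicIndependent
    (hy.finite (aeval_quotientVars_surjective Q')).to_isIntegral _ hheight
  have hme : m ≤ e := hx.le_of_algebraicIndependent hz fun i => by
    have := Submodule.mem_map_of_mem (f := (Ideal.Quotient.factorₐ k hle).toLinearMap)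
      (pow_one (affineSpan k (quotientVars Q')) ▸ hy.mem (z i))
    rwa [map_factorₐ_affineSpan_pow, pow_one] at this
  omega

theorem exists_isPrime_between_hasDim [Infinite k] {n : ℕ} {Q Q' : Ideal (MvPolynomial (Fin n) k)}
    [Q.IsPrime] [Q'.IsPrime] (h : Q ≤ Q') {f : MvPolynomial (Fin n) k} (hf : f ∈ Q')
    (hfQ : f ∉ Q) {e : ℕ} (he : HasDim Q (e + 1)) :
    ∃ P : Ideal (MvPolynomial (Fin n) k), P.IsPrime ∧ Q ≤ P ∧ f ∈ P ∧ P ≤ Q' ∧ HasDim P e := by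
  obtain ⟨P, hP, hPQ'⟩ := Ideal.exists_minimalPrimes_le (I := Q ⊔ Ideal.span {f}) (J := Q')
    (sup_le h ((Ideal.span_singleton_le_iff_mem _).2 hf))
  have := hP.isPrime
  obtain ⟨e', -, he'⟩ := exists_hasDim P
  obtain rfl : e' = e := by
    have := HasDim.add_one_eq_of_mem_minimalPrimes hfQ hP he' he
    omega
  exact ⟨P, hP.isPrime, le_sup_left.trans hP.le,
    hP.le (Ideal.mem_sup_right (Ideal.mem_span_singleton_self f)), hPQ', he'⟩

theorem exists_isPrime_between_hasDim_of_le [Infinite k] {n : ℕ}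
    {P Q : Ideal (MvPolynomial (Fin n) k)} [P.IsPrime] [hQ : Q.IsPrime] (h : P ≤ Q) {d e c : ℕ}
    (hP : HasDim P e) (hQd : HasDim Q d) (hdc : d ≤ c) (hce : c ≤ e) :
    ∃ P' : Ideal (MvPolynomial (Fin n) k), P'.IsPrime ∧ P ≤ P' ∧ P' ≤ Q ∧ HasDim P' c := by
  induction e, hce using Nat.le_induction generalizing P with
  | base => exact ⟨P, inferInstance, le_rfl, h, hP⟩
  | succ e hce ih =>
    have hlt : P < Q := lt_of_le_of_ne h fun hPQ => by
      have := (hPQ ▸ hP).unique hQd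
      omega
    obtain ⟨-, f, hf, hfP⟩ := SetLike.lt_iff_le_and_exists.1 hlt
    obtain ⟨P₁, hP₁, hPP₁, -, hP₁Q, hP₁e⟩ := exists_isPrime_between_hasDim h hf hfP hP
    obtain ⟨P', hP', hle, hP'Q, hP'c⟩ := ih hP₁Q hP₁e
    exact ⟨P', hP', hPP₁.trans hle, hP'Q, hP'c⟩

end Krull

section Varieties

variable {n} {V W : Set (Fin n → ℂ)} {S T : Set (MvPolynomial (Fin n) ℂ)}
  {Q Q' : Ideal (MvPolynomial (Fin n) ℂ)}

theorem vanishingIdeal_zeroLocus (Q : Ideal (MvPolynomial (Fin n) ℂ)) [Q.IsPrime] :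
    vanishingIdeal n (zeroLocus n Q) = Q :=
  MvPolynomial.IsPrime.vanishingIdeal_zeroLocus Q

theorem subset_zeroLocus_iff : V ⊆ zeroLocus n S ↔ S ⊆ vanishingIdeal n V :=
  ⟨fun h _ hf _ hx => h hx _ hf, fun h _ hx _ hf => h hf _ hx⟩

theorem subset_zeroLocus_iff_span_le :
    V ⊆ zeroLocus n S ↔ Ideal.span S ≤ vanishingIdeal n V :=
  subset_zeroLocus_iff.trans Ideal.span_le.symm

theorem zeroLocus_anti (h : S ⊆ T) : zeroLocus n T ⊆ zeroLocus n S :=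
  fun _ hx f hf => hx f (h hf)

theorem vanishingIdeal_anti (h : V ⊆ W) : vanishingIdeal n W ≤ vanishingIdeal n V :=
  fun _ hf x hx => hf x (h hx)

theorem IsAlgebraicSet.zeroLocus_vanishingIdeal (h : IsAlgebraicSet n V) :
    zeroLocus n (vanishingIdeal n V) = V := by
  obtain ⟨I, rfl⟩ := h
  exact Subset.antisymm (fun x hx f hf => hx f fun z hz => hz f hf) fun x hx f hf => hf x hx

theorem IsAlgebraicSet.vanishingIdeal_le_iff (hW : IsAlgebraicSet n W) :
    vanishingIdeal n W ≤ vanishingIdeal n V ↔ V ⊆ W :=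
  ⟨fun h => hW.zeroLocus_vanishingIdeal ▸ subset_zeroLocus_iff.2 h, vanishingIdeal_anti⟩

theorem IsAlgebraicSet.vanishingIdeal_lt (hV : IsAlgebraicSet n V) (h : V ⊂ W) :
    vanishingIdeal n W < vanishingIdeal n V :=
  ⟨vanishingIdeal_anti h.1, fun hle => h.2 (hV.vanishingIdeal_le_iff.1 hle)⟩

theorem IsIrredVariety.isPrime (h : IsIrredVariety n V) : (vanishingIdeal n V).IsPrime := by
  obtain ⟨-, ⟨x, hx⟩, hirred⟩ := h
  refine ⟨(Ideal.ne_top_iff_one _).2 fun h1 => by simpa using h1 x hx, fun {f g} hfg => ?_⟩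
  have hcover : V ⊆ zeroLocus n {f} ∪ zeroLocus n {g} := fun z hz => by
    simpa [zeroLocus] using hfg z hz
  simpa only [subset_zeroLocus_iff, singleton_subset_iff, SetLike.mem_coe] using
    hirred _ _ ⟨_, rfl⟩ ⟨_, rfl⟩ hcover

theorem isIrredVariety_zeroLocus (Q : Ideal (MvPolynomial (Fin n) ℂ)) [hQ : Q.IsPrime] :
    IsIrredVariety n (zeroLocus n Q) := by
  refine ⟨⟨_, rfl⟩, ?_, ?_⟩
  · refine nonempty_iff_ne_empty.2 fun hempty => hQ.ne_top (eq_top_iff.2 fun f _ => ?_)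
    rw [← vanishingIdeal_zeroLocus Q, hempty]
    exact fun _ hx => hx.elim
  · rintro _ _ ⟨S, rfl⟩ ⟨T, rfl⟩ hcover
    by_contra! hcon
    simp only [subset_zeroLocus_iff, vanishingIdeal_zeroLocus, not_subset] at hcon
    obtain ⟨⟨f, hf, hfQ⟩, g, hg, hgQ⟩ := hcon
    refine (hQ.mem_or_mem (x := f) (y := g) ?_).elim hfQ hgQ
    rw [← vanishingIdeal_zeroLocus Q]
    intro x hx
    rw [map_mul]
    exact (hcover hx).elim (fun h => by rw [h f hf, zero_mul]) fun h => by rw [h g hg, mul_zero]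

theorem isIrredComponent_zeroLocus_iff (hW : IsIrredVariety n W) :
    IsIrredComponent n W (zeroLocus n S) ↔
      vanishingIdeal n W ∈ (Ideal.span S).minimalPrimes := by
  constructor
  · rintro ⟨-, hWS, hmax⟩
    refine ⟨⟨hW.isPrime, subset_zeroLocus_iff_span_le.1 hWS⟩, ?_⟩
    rintro Q ⟨hQ, hSQ⟩ hQW
    rw [← hmax _ (isIrredVariety_zeroLocus Q) (subset_zeroLocus_iff.2 hQW)
      (zeroLocus_anti (Ideal.span_le.1 hSQ)), vanishingIdeal_zeroLocus]
  · intro h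
    refine ⟨hW, subset_zeroLocus_iff_span_le.2 h.le, fun W' hW' hWW' hW'S => ?_⟩
    exact hWW'.antisymm' (hW.1.vanishingIdeal_le_iff.1
      (h.2 ⟨hW'.isPrime, subset_zeroLocus_iff_span_le.1 hW'S⟩ (vanishingIdeal_anti hWW')))

theorem HasDim.not_isMaximal {e : ℕ} (h : HasDim Q (e + 1)) : ¬ Q.IsMaximal := by
  intro hmax
  obtain ⟨y, hy⟩ := h
  let _ := (aeval y : MvPolynomial (Fin (e + 1)) ℂ →ₐ[ℂ] _).toRingHom.toAlgebra
  have : Algebra.IsIntegral (MvPolynomial (Fin (e + 1)) ℂ) (MvPolynomial (Fin n) ℂ ⧸ Q) :=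
    ⟨(hy.finite (aeval_quotientVars_surjective Q)).to_isIntegral⟩
  have hfield : IsField (MvPolynomial (Fin (e + 1)) ℂ) :=
    isField_of_isIntegral_of_isField hy.algebraicIndependent
      ((Ideal.Quotient.maximal_ideal_iff_isField_quotient Q).1 hmax)
  obtain ⟨g, hg⟩ := hfield.mul_inv_cancel (X_ne_zero (0 : Fin (e + 1)))
  simpa using congrArg (eval fun _ => (0 : ℂ)) hg

theorem HasChain.le_of_hasDim [hV : (vanishingIdeal n V).IsPrime] {d e : ℕ}
    (hd : HasChain n V d) (he : HasDim (vanishingIdeal n V) e) : d ≤ e := by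
  obtain ⟨W, hW, hlt, hWV⟩ := hd
  have hprime := fun i => (hW i).isPrime
  choose k _ hk using fun i => exists_hasDim (vanishingIdeal n (W i))
  have hmono : StrictMono k := fun i j hij =>
    (hk j).lt (hk i) ((hW i).1.vanishingIdeal_lt (hlt i j hij))
  have hle : ∀ i : Fin (d + 1), (i : ℕ) ≤ k i := fun i => by
    induction i using Fin.induction with
    | zero => exact Nat.zero_le _
    | succ i ih => exact Nat.succ_le_of_lt (ih.trans_lt (hmono i.castSucc_lt_succ))
  exact (hle (Fin.last d)).trans (he.anti (hk _) (vanishingIdeal_anti hWV))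

theorem HasChain.succ {d : ℕ} (h : HasChain n W d) (hV : IsIrredVariety n V) (hWV : W ⊂ V) :
    HasChain n V (d + 1) := by
  obtain ⟨U, hU, hlt, hUW⟩ := h
  have hmono : StrictMono (Fin.snoc U V : Fin (d + 1 + 1) → Set (Fin n → ℂ)) := by
    refine Fin.strictMono_iff_lt_succ.2 fun i => ?_
    refine Fin.lastCases ?_ (fun i => ?_) i
    · simpa using hUW.trans_ssubset hWV
    · rw [← Fin.castSucc_succ, Fin.snoc_castSucc, Fin.snoc_castSucc]
      exact hlt _ _ i.castSucc_lt_succ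
  refine ⟨Fin.snoc U V, fun i => ?_, fun _ _ hij => hmono hij, by simp⟩
  refine Fin.lastCases ?_ (fun i => ?_) i
  · simpa using hV
  · simpa using hU i

theorem HasDim.hasChain_zeroLocus {e : ℕ} [hQ : Q.IsPrime] (h : HasDim Q e) :
    HasChain n (zeroLocus n Q) e := by
  induction e generalizing Q with
  | zero =>
    exact ⟨fun _ => zeroLocus n Q, fun _ => isIrredVariety_zeroLocus Q, fun i j hij => by omega,
      Subset.rfl⟩
  | succ e ih =>
    obtain ⟨M, hM, hQM⟩ := Ideal.exists_le_maximal Q hQ.ne_top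
    obtain ⟨-, f, hfM, hfQ⟩ := SetLike.lt_iff_le_and_exists.1
      (lt_of_le_of_ne hQM (by rintro rfl; exact h.not_isMaximal hM))
    have := hM.isPrime
    obtain ⟨P, hP, hQP, hfP, -, hPe⟩ := exists_isPrime_between_hasDim hQM hfM hfQ h
    refine (ih hPe).succ (isIrredVariety_zeroLocus Q) ⟨zeroLocus_anti hQP, fun hsub => hfQ ?_⟩
    rw [← vanishingIdeal_zeroLocus P, ← SetLike.mem_coe] at hfP
    rw [← vanishingIdeal_zeroLocus Q]
    exact vanishingIdeal_anti hsub hfP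

theorem IsIrredVariety.dim_eq_of_hasDim (hV : IsIrredVariety n V) {e : ℕ}
    (h : HasDim (vanishingIdeal n V) e) : dim n V = e := by
  have := hV.isPrime
  have hle : ∀ d ∈ {d | HasChain n V d}, d ≤ e := fun d hd => HasChain.le_of_hasDim hd h
  refine le_antisymm (csSup_le' hle) (le_csSup ⟨e, hle⟩ ?_)
  have hchain := h.hasChain_zeroLocus
  rwa [hV.1.zeroLocus_vanishingIdeal] at hchain

theorem IsIrredVariety.hasDim_dim (hV : IsIrredVariety n V) :
    HasDim (vanishingIdeal n V) (dim n V) := by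
  have := hV.isPrime
  obtain ⟨e, -, he⟩ := exists_hasDim (vanishingIdeal n V)
  rwa [hV.dim_eq_of_hasDim he]

theorem IsIrredVariety.dim_le (hV : IsIrredVariety n V) : dim n V ≤ n := by
  have := hV.isPrime
  obtain ⟨e, hen, he⟩ := exists_hasDim (vanishingIdeal n V)
  rwa [hV.dim_eq_of_hasDim he]

end Varieties

section CodimDegree

variable {k : Type*} [Field k] {n : ℕ} {J J' P Q Q' : Ideal (MvPolynomial (Fin n) k)}
  {d e i δ : ℕ}

theorem hasDim_bot : HasDim (⊥ : Ideal (MvPolynomial (Fin n) k)) n := by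
  refine ⟨quotientVars ⊥, mem_affineSpan _, ?_, 0, fun D => by simp⟩
  rw [algebraicIndependent_iff]
  intro f hf
  rwa [aeval_quotientVars, Ideal.Quotient.eq_zero_iff_mem, Ideal.mem_bot] at hf

/-- The dimensions of the primes between `J` and `Q`. For `Q = I(V)` the greatest element is
the greatest dimension of a component through `V` of the zero locus of `J`. -/
def dimsBetween (J Q : Ideal (MvPolynomial (Fin n) k)) : Set ℕ :=
  {e | ∃ P : Ideal (MvPolynomial (Fin n) k), P.IsPrime ∧ J ≤ P ∧ P ≤ Q ∧ HasDim P e}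

theorem dimsBetween_subset (hJ : J ≤ J') (hQ : Q' ≤ Q) : dimsBetween J' Q' ⊆ dimsBetween J Q :=
  fun _ ⟨P, hP, hJP, hPQ, he⟩ => ⟨P, hP, hJ.trans hJP, hPQ.trans hQ, he⟩

theorem le_of_mem_dimsBetween (h : e ∈ dimsBetween J Q) : e ≤ n :=
  let ⟨_, _, _, _, he⟩ := h
  hasDim_bot.anti he bot_le

theorem mem_dimsBetween_bot : n ∈ dimsBetween ⊥ Q :=
  ⟨⊥, Ideal.isPrime_bot, le_rfl, bot_le, hasDim_bot⟩

theorem exists_mem_dimsBetween_sup_span [Infinite k] [Q.IsPrime] (he : e ∈ dimsBetween J Q)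
    {f : MvPolynomial (Fin n) k} (hf : f ∈ Q) :
    ∃ e' ∈ dimsBetween (J ⊔ Ideal.span {f}) Q, e ≤ e' + 1 := by
  obtain ⟨P, hP, hJP, hPQ, he⟩ := he
  simp only [dimsBetween, sup_le_iff, Ideal.span_singleton_le_iff_mem]
  by_cases hfP : f ∈ P
  · exact ⟨e, ⟨P, hP, ⟨hJP, hfP⟩, hPQ, he⟩, Nat.le_succ e⟩
  · obtain ⟨d, -, hd⟩ := exists_hasDim Q
    obtain ⟨e, rfl⟩ := Nat.exists_eq_add_one.2
      ((he.lt hd (lt_of_le_of_ne hPQ (by rintro rfl; exact hfP hf))).pos)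
    obtain ⟨P', hP', hPP', hfP', hP'Q, he'⟩ := exists_isPrime_between_hasDim hPQ hf hfP he
    exact ⟨e, ⟨P', hP', ⟨hJP.trans hPP', hfP'⟩, hP'Q, he'⟩, le_rfl⟩

/-- A discrete intermediate value theorem: adding one generator lowers the greatest dimension by at
most one. -/
theorem exists_subset_isGreatest_dimsBetween [Infinite k] [Q.IsPrime] {c : ℕ} (hc : c ≤ n)
    (s : Finset (MvPolynomial (Fin n) k)) (hs : ∀ f ∈ s, f ∈ Q)
    (hle : ∀ e ∈ dimsBetween (Ideal.span s) Q, e ≤ c) :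
    ∃ t ⊆ s, IsGreatest (dimsBetween (Ideal.span t) Q) c := by
  classical
  induction s using Finset.induction_on with
  | empty =>
    rw [Finset.coe_empty, Ideal.span_empty] at hle
    obtain rfl := hc.antisymm (hle n mem_dimsBetween_bot)
    exact ⟨∅, subset_rfl, by simpa using mem_dimsBetween_bot, fun e he => le_of_mem_dimsBetween he⟩
  | insert f s _ ih =>
    by_cases hle' : ∀ e ∈ dimsBetween (Ideal.span s) Q, e ≤ c
    · obtain ⟨t, ht, htc⟩ := ih (fun g hg => hs g (Finset.mem_insert_of_mem hg)) hle'
      exact ⟨t, ht.trans (Finset.subset_insert f s), htc⟩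
    · push Not at hle'
      obtain ⟨e, he, hce⟩ := hle'
      obtain ⟨e', he', hee'⟩ := exists_mem_dimsBetween_sup_span he
        (hs f (Finset.mem_insert_self f s))
      rw [sup_comm, ← Ideal.span_insert, ← Finset.coe_insert] at he'
      obtain rfl : e' = c := (hle e' he').antisymm (by omega)
      exact ⟨_, subset_rfl, he', hle⟩

/-- The ideal generated by the elements of `Q` of degree at most `δ`. -/
def lowDegreeIdeal (Q : Ideal (MvPolynomial (Fin n) k)) (δ : ℕ) : Ideal (MvPolynomial (Fin n) k) :=
  Ideal.span {f ∈ Q | f.totalDegree ≤ δ}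

/-- The elements of `Q` of degree at most `δ` cut out a set that has codimension at least `i`
near the variety of `Q`. -/
def CutsCodim (Q : Ideal (MvPolynomial (Fin n) k)) (i δ : ℕ) : Prop :=
  ∀ e ∈ dimsBetween (lowDegreeIdeal Q δ) Q, e + i ≤ n

/-- The algebraic counterpart of the partial degree `δ_i(V)`, where `Q = I(V)`. -/
def codimDegree (Q : Ideal (MvPolynomial (Fin n) k)) (i : ℕ) : ℕ :=
  sInf {δ | CutsCodim Q i δ}

theorem span_le_lowDegreeIdeal {s : Set (MvPolynomial (Fin n) k)} (hs : Ideal.span s ≤ Q)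
    (hδ : ∀ f ∈ s, f.totalDegree ≤ δ) : Ideal.span s ≤ lowDegreeIdeal Q δ :=
  Ideal.span_mono fun f hf => ⟨hs (Ideal.subset_span hf), hδ f hf⟩

theorem lowDegreeIdeal_le_iff :
    lowDegreeIdeal Q δ ≤ J ↔ ∀ f ∈ Q, f.totalDegree ≤ δ → f ∈ J := by
  simp only [lowDegreeIdeal, Ideal.span_le, Set.subset_def, mem_ofPred_eq, and_imp, SetLike.mem_coe]

theorem CutsCodim.mono {δ' : ℕ} (h : CutsCodim Q i δ) (hδ : δ ≤ δ') : CutsCodim Q i δ' :=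
  fun e he => h e (dimsBetween_subset
    (lowDegreeIdeal_le_iff.2 fun f hf hfδ => lowDegreeIdeal_le_iff.1 le_rfl f hf (hfδ.trans hδ))
    le_rfl he)

theorem exists_span_finset_eq_lowDegreeIdeal (Q : Ideal (MvPolynomial (Fin n) k)) (δ : ℕ) :
    ∃ s : Finset (MvPolynomial (Fin n) k), (∀ f ∈ s, f ∈ Q ∧ f.totalDegree ≤ δ) ∧
      Ideal.span s = lowDegreeIdeal Q δ := by
  obtain ⟨s, hs, hspan⟩ := (Submodule.fg_span_iff_fg_span_finset_subset _).1
    (IsNoetherian.noetherian (lowDegreeIdeal Q δ))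
  exact ⟨s, fun f hf => hs hf, hspan.symm⟩

theorem exists_cutsCodim (hQ : HasDim Q d) (hi : i + d ≤ n) : ∃ δ, CutsCodim Q i δ := by
  obtain ⟨s, rfl⟩ := IsNoetherian.noetherian Q
  refine ⟨s.sup totalDegree, fun e ⟨P, _, hJP, hPQ, he⟩ => ?_⟩
  have hle : Ideal.span s ≤ P := (span_le_lowDegreeIdeal le_rfl fun f hf =>
    Finset.le_sup (f := totalDegree) hf).trans hJP
  obtain rfl := hPQ.antisymm hle
  rw [he.unique hQ]
  omega

theorem codimDegree_le_iff (hQ : HasDim Q d) (hi : i + d ≤ n) :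
    codimDegree Q i ≤ δ ↔ CutsCodim Q i δ :=
  ⟨fun h => CutsCodim.mono (Nat.sInf_mem (exists_cutsCodim hQ hi)) h, fun h => Nat.sInf_le h⟩

theorem codimDegree_mono {j : ℕ} (hQ : HasDim Q d) (hij : i ≤ j) (hj : j + d ≤ n) :
    codimDegree Q i ≤ codimDegree Q j :=
  (codimDegree_le_iff hQ (by omega)).2 fun e he => by
    have := (codimDegree_le_iff hQ hj).1 le_rfl e he
    omega

theorem exists_notMem_of_codimDegree (hQ : HasDim Q d) (hi : i + d ≤ n) [hP : P.IsPrime]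
    (hPQ : P ≤ Q) (hPe : HasDim P e) (he : n < e + i) :
    ∃ f ∈ Q, f.totalDegree ≤ codimDegree Q i ∧ f ∉ P := by
  by_contra! hmem
  have := (codimDegree_le_iff hQ hi).1 le_rfl e ⟨P, hP, lowDegreeIdeal_le_iff.2 hmem, hPQ, hPe⟩
  omega

theorem codimDegree_pos [hQ : Q.IsPrime] (hQd : HasDim Q d) (hi : i + d ≤ n) (hi0 : 0 < i) :
    0 < codimDegree Q i := by
  have := Ideal.isPrime_bot (α := MvPolynomial (Fin n) k)
  obtain ⟨f, hf, hfδ, hf0⟩ := exists_notMem_of_codimDegree hQd hi bot_le hasDim_bot (by omega)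
  refine Nat.pos_of_ne_zero fun h0 => ?_
  rw [h0, Nat.le_zero, totalDegree_eq_zero_iff_eq_C] at hfδ
  rw [hfδ] at hf
  rw [Ideal.mem_bot, hfδ, map_eq_zero] at hf0
  exact hQ.ne_top (Ideal.eq_top_of_isUnit_mem _ hf ((isUnit_iff_ne_zero.2 hf0).map C))

/-- The prime of an `(n - s)`-minimal variety. -/
theorem exists_isPrime_hasDim_codimDegree_le [Infinite k] [Q.IsPrime] (hQ : HasDim Q d) {s : ℕ}
    (hs : s + d < n) :
    ∃ P : Ideal (MvPolynomial (Fin n) k), P.IsPrime ∧ P ≤ Q ∧ HasDim P (n - s) ∧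
      ∀ f ∈ Q, f ∉ P → codimDegree Q (s + 1) ≤ f.totalDegree := by
  have hpos := codimDegree_pos hQ (i := s + 1) (by omega) (by omega)
  have hnot := mt (codimDegree_le_iff hQ (i := s + 1) (δ := codimDegree Q (s + 1) - 1)
    (by omega)).2 (by omega)
  simp only [CutsCodim, not_forall] at hnot
  obtain ⟨e, ⟨P, hP, hJP, hPQ, he⟩, hes⟩ := hnot
  obtain ⟨P', hP', hPP', hP'Q, hP's⟩ :=
    exists_isPrime_between_hasDim_of_le hPQ he hQ (c := n - s) (by omega) (by omega)
  refine ⟨P', hP', hP'Q, hP's, fun f hf hfP' => ?_⟩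
  by_contra! hlt
  exact hfP' (hPP' (lowDegreeIdeal_le_iff.1 hJP f hf (by omega)))

end CodimDegree

section PartialDegree

variable {n : ℕ} {V W : Set (Fin n → ℂ)} {S : Set (MvPolynomial (Fin n) ℂ)}

theorem IsIrredVariety.maxCompDimEq_iff (hV : IsIrredVariety n V) {e : ℕ} :
    MaxCompDimEq n (zeroLocus n S) V e ↔
      IsGreatest (dimsBetween (Ideal.span S) (vanishingIdeal n V)) e := by
  have := hV.isPrime
  have exists_component {e' : ℕ}
      (he' : e' ∈ dimsBetween (Ideal.span S) (vanishingIdeal n V)) :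
      ∃ W, IsIrredComponent n W (zeroLocus n S) ∧ V ⊆ W ∧ e' ≤ dim n W := by
    obtain ⟨P, hP, hSP, hPV, he'⟩ := he'
    obtain ⟨Q, hQ, hQP⟩ := Ideal.exists_minimalPrimes_le hSP
    have := hQ.isPrime
    have hW := isIrredVariety_zeroLocus Q
    refine ⟨zeroLocus n Q, (isIrredComponent_zeroLocus_iff hW).2
      ((vanishingIdeal_zeroLocus Q).symm ▸ hQ), subset_zeroLocus_iff.2 (hQP.trans hPV), ?_⟩
    have := hW.isPrime
    exact hW.hasDim_dim.anti he' ((vanishingIdeal_zeroLocus Q).trans_le hQP)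
  have dim_mem {W : Set (Fin n → ℂ)} (hW : IsIrredComponent n W (zeroLocus n S)) (hVW : V ⊆ W) :
      dim n W ∈ dimsBetween (Ideal.span S) (vanishingIdeal n V) :=
    ⟨_, hW.1.isPrime, subset_zeroLocus_iff_span_le.1 hW.2.1, vanishingIdeal_anti hVW,
      hW.1.hasDim_dim⟩
  constructor
  · rintro ⟨⟨W, hW, hVW, rfl⟩, hmax⟩
    refine ⟨dim_mem hW hVW, fun e' he' => ?_⟩
    obtain ⟨W', hW', hVW', hle⟩ := exists_component he'
    exact hle.trans (hmax W' hW' hVW')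
  · rintro ⟨he, hmax⟩
    obtain ⟨W, hW, hVW, hle⟩ := exists_component he
    exact ⟨⟨W, hW, hVW, hle.antisymm' (hmax (dim_mem hW hVW))⟩,
      fun W' hW' hVW' => hmax (dim_mem hW' hVW')⟩

theorem IsIrredVariety.partialDeg_eq_codimDegree (hV : IsIrredVariety n V) {i : ℕ} (hi : i ≠ 0)
    (hin : i ≤ n) : partialDeg n V i = codimDegree (vanishingIdeal n V) i := by
  have := hV.isPrime
  rw [partialDeg, if_neg hi, codimDegree]
  congr 1
  ext δ
  simp only [mem_ofPred_eq, hV.maxCompDimEq_iff, subset_zeroLocus_iff_span_le]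
  constructor
  · rintro ⟨I, hIδ, hIV, -, hmax⟩ e he
    have := hmax (dimsBetween_subset (span_le_lowDegreeIdeal hIV hIδ) le_rfl he)
    omega
  · intro hcut
    obtain ⟨s, hs, hspan⟩ := exists_span_finset_eq_lowDegreeIdeal (vanishingIdeal n V) δ
    obtain ⟨t, hts, ht⟩ := exists_subset_isGreatest_dimsBetween (Nat.sub_le n i) s
      (fun f hf => (hs f hf).1) fun e he => by
        have := hcut e (hspan ▸ he)
        omega
    exact ⟨t, fun f hf => (hs f (hts hf)).2, Ideal.span_le.2 fun f hf => (hs f (hts hf)).1, ht⟩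

end PartialDegree

section PointIdeal

variable {k σ : Type*} [Field k]

/-- The automorphism `f ↦ f(X + p)` of the polynomial ring. -/
def translate (p : σ → k) : MvPolynomial σ k ≃ₐ[k] MvPolynomial σ k :=
  AlgEquiv.ofAlgHom (aeval fun i => X i + C (p i)) (aeval fun i => X i - C (p i))
    (algHom_ext fun i => by simp [← algebraMap_eq]) (algHom_ext fun i => by simp [← algebraMap_eq])

/-- The maximal ideal of the point `p`; membership in its powers is vanishing of Taylor
coefficients at `p`. -/
def pointIdeal (p : σ → k) : Ideal (MvPolynomial σ k) :=
  (idealOfVars σ k).map (translate p).symm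

theorem mem_pointIdeal_pow {p : σ → k} {N : ℕ} {f : MvPolynomial σ k} :
    f ∈ pointIdeal p ^ N ↔ ∀ α : σ →₀ ℕ, α.degree < N → coeff α (translate p f) = 0 := by
  rw [pointIdeal, ← Ideal.map_pow, Ideal.mem_map_of_equiv, ← mem_pow_idealOfVars_iff']
  exact ⟨fun ⟨g, hg, hgf⟩ => by simpa [← hgf] using hg, fun h => ⟨_, h, by simp⟩⟩

theorem mem_pointIdeal {p : σ → k} {f : MvPolynomial σ k} : f ∈ pointIdeal p ↔ eval p f = 0 := by
  have hconst : constantCoeff (translate p f) = eval p f := by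
    induction f using MvPolynomial.induction_on with
    | C a => simp [translate, algebraMap_eq]
    | add f g hf hg => rw [map_add, map_add, hf, hg, map_add]
    | mul_X f i hf => rw [map_mul, map_mul, hf, map_mul]; simp [translate]
  rw [← pow_one (pointIdeal p), mem_pointIdeal_pow, ← hconst]
  simp [Finsupp.degree_eq_zero_iff, constantCoeff_eq]

instance pointIdeal_isMaximal (p : σ → k) : (pointIdeal p).IsMaximal := by
  have hker : pointIdeal p = RingHom.ker (eval p) := Ideal.ext fun _ => mem_pointIdeal
  exact hker ▸ RingHom.ker_isMaximal_of_surjective _ fun a => ⟨C a, eval_C a⟩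

theorem mem_pointIdeal_pow_of_mul_mem {p : σ → k} {N : ℕ} {f g : MvPolynomial σ k}
    (hg : eval p g ≠ 0) (h : g * f ∈ pointIdeal p ^ N) : f ∈ pointIdeal p ^ N := by
  obtain rfl | hN := eq_or_ne N 0
  · simp
  have hrad : (pointIdeal p ^ N).radical = pointIdeal p := by
    rw [Ideal.radical_pow _ hN, (pointIdeal_isMaximal p).isPrime.radical]
  have hprimary := Ideal.isPrimary_of_isMaximal_radical (hrad.symm ▸ pointIdeal_isMaximal p)
  refine ((Ideal.isPrimary_iff.1 hprimary).2 (mul_comm g f ▸ h)).resolve_right ?_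
  rwa [hrad, mem_pointIdeal]

theorem totalDegree_translate_le (p : σ → k) (f : MvPolynomial σ k) :
    (translate p f).totalDegree ≤ f.totalDegree := by
  have hmem : translate p f ∈ affineSpan k (fun i => X i + C (p i) : σ → MvPolynomial σ k) ^
      f.totalDegree := mem_affineSpan_pow.2 ⟨f, le_rfl, rfl⟩
  have hle : affineSpan k (fun i => X i + C (p i) : σ → MvPolynomial σ k) ≤
      affineSpan k (X : σ → MvPolynomial σ k) :=
    affineSpan_le.2 ⟨one_mem_affineSpan _, fun i => Submodule.add_mem _ (mem_affineSpan _ i) (by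
      rw [← mul_one (C (p i)), ← smul_eq_C_mul]
      exact Submodule.smul_mem _ _ (one_mem_affineSpan _))⟩
  obtain ⟨g, hg, hgf⟩ := mem_affineSpan_pow.1 (pow_le_pow_left' hle _ hmem)
  rwa [← hgf, aeval_X_left_apply]

theorem eq_zero_of_mem_pointIdeal_pow {p : σ → k} {N : ℕ} {f : MvPolynomial σ k}
    (hf : f ∈ pointIdeal p ^ N) (hdeg : f.totalDegree < N) : f = 0 := by
  rw [← (translate p).map_eq_zero_iff]
  ext α
  by_cases hα : α.degree < N
  · exact mem_pointIdeal_pow.1 hf α hα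
  · exact coeff_eq_zero_of_totalDegree_lt
      ((totalDegree_translate_le p f).trans_lt (hdeg.trans_le (not_lt.1 hα)))

theorem exists_linearMap_ker_le_pointIdeal_pow {e : ℕ} (p : Fin e → k) (D : ℕ) :
    ∃ φ : MvPolynomial (Fin e) k →ₗ[k] (Fin e → Fin (D + 1)) → k,
      ∀ f, φ f = 0 → f ∈ pointIdeal p ^ (D + 1) := by
  let taylor (a : Fin e → Fin (D + 1)) : MvPolynomial (Fin e) k →ₗ[k] k :=
    lcoeff k (Finsupp.equivFunOnFinite.symm fun i => (a i : ℕ)) ∘ₗ (translate p).toLinearMap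
  refine ⟨LinearMap.pi taylor, fun f hf => mem_pointIdeal_pow.2 fun α hα => ?_⟩
  have hα' (i : Fin e) : α i < D + 1 := (Finsupp.le_degree i α).trans_lt hα
  have hcoeff := congrFun hf fun i => ⟨α i, hα' i⟩
  have hexponent : Finsupp.equivFunOnFinite.symm (fun i => α i) = α := Finsupp.ext fun _ => rfl
  simpa [taylor, hexponent] using hcoeff

end PointIdeal

section Growth

theorem exists_linearIndepOn_smul_mem_span {S M ι : Type*} [CommRing S] [IsDomain S]
    [AddCommGroup M] [Module S M] [Finite ι] (v : ι → M) :
    ∃ s : Set ι, LinearIndepOn S v s ∧ ∃ g : S, g ≠ 0 ∧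
      ∀ x ∈ Submodule.span S (range v), g • x ∈ Submodule.span S (v '' s) := by
  classical
  have := Fintype.ofFinite ι
  obtain ⟨s, hs, hmax⟩ := exists_maximal_linearIndepOn S v
  have hdep (i : ι) : ∃ a : S, a ≠ 0 ∧ a • v i ∈ Submodule.span S (v '' s) := by
    by_cases hi : i ∈ s
    · exact ⟨1, one_ne_zero, by simpa using Submodule.subset_span (mem_image_of_mem v hi)⟩
    · exact hmax i hi
  choose a ha hav using hdep
  refine ⟨s, hs, ∏ i, a i, Finset.prod_ne_zero_iff.2 fun i _ => ha i, fun x hx => ?_⟩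
  suffices hle : Submodule.span S (range v) ≤
      (Submodule.span S (v '' s)).comap (LinearMap.lsmul S M (∏ i, a i)) from hle hx
  rw [Submodule.span_le]
  rintro _ ⟨i, rfl⟩
  rw [SetLike.mem_coe, Submodule.mem_comap, LinearMap.lsmul_apply,
    ← Finset.prod_erase_mul _ _ (Finset.mem_univ i), mul_smul]
  exact Submodule.smul_mem _ _ (hav i)

theorem exists_linearIndependent_smul_eq_sum {S M ι : Type*} [CommRing S] [IsDomain S]
    [AddCommGroup M] [Module S M] [Finite ι] (v : ι → M) :
    ∃ (r : ℕ) (w : Fin r → ι), LinearIndependent S (v ∘ w) ∧ ∃ g : S, g ≠ 0 ∧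
      ∃ c : Submodule.span S (range v) →ₗ[S] Fin r → S,
        ∀ x : Submodule.span S (range v), g • (x : M) = ∑ i, c x i • v (w i) := by
  obtain ⟨s, hs, g, hg, hgv⟩ := exists_linearIndepOn_smul_mem_span (S := S) v
  let w := (Finite.equivFin s).symm
  have hw : LinearIndependent S fun i => v (w i) := hs.comp w w.injective
  have hrange : range (fun i => v (w i)) = v '' s := by
    rw [image_eq_range, ← w.surjective.range_comp fun i : s => v i]
    rfl
  let smul_g := (LinearMap.lsmul S M g).restrict (p := Submodule.span S (range v))
    (q := Submodule.span S (range fun i => v (w i))) fun x hx => hrange ▸ hgv x hx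
  let basis := Module.Basis.span hw
  refine ⟨_, fun i => w i, hw, g, hg, basis.equivFun.toLinearMap ∘ₗ smul_g, fun x => ?_⟩
  have hsum := congrArg (Submodule.subtype _) (basis.sum_equivFun (smul_g x))
  simp only [map_sum, map_smul, Submodule.subtype_apply, basis, Module.Basis.span_apply] at hsum
  exact hsum.symm

theorem exists_injective_linearMap_fin {S M : Type*} [CommRing S] [IsDomain S] [AddCommGroup M]
    [Module S M] [Module.IsTorsionFree S M] [Module.Finite S M] :
    ∃ (r : ℕ) (ψ : M →ₗ[S] Fin r → S), Function.Injective ψ := by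
  obtain ⟨N, v, hv⟩ := Module.Finite.exists_fin (R := S) (M := M)
  obtain ⟨r, w, -, g, hg, c, hc⟩ := exists_linearIndependent_smul_eq_sum (S := S) v
  refine ⟨r, c ∘ₗ LinearMap.id.codRestrict _ fun x => hv ▸ Submodule.mem_top,
    (injective_iff_map_eq_zero _).2 fun x hx => ?_⟩
  rw [LinearMap.comp_apply] at hx
  have hgx := hc (LinearMap.id.codRestrict _ (fun x => hv ▸ Submodule.mem_top) x)
  simp only [hx, Pi.zero_apply, zero_smul, Finset.sum_const_zero] at hgx
  exact (smul_eq_zero.1 hgx).resolve_left hg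

theorem IsNoetherNormalization.exists_algebra {k R ι : Type*} [Field k] [CommRing R] [Algebra k R]
    [Finite ι] {l : ι → R} {e : ℕ} {y : Fin e → R} (h : IsNoetherNormalization k l y)
    (hl : Function.Surjective (aeval l : MvPolynomial ι k →ₐ[k] R)) :
    ∃ (_ : Algebra (MvPolynomial (Fin e) k) R) (_ : IsScalarTower k (MvPolynomial (Fin e) k) R),
      Module.Finite (MvPolynomial (Fin e) k) R ∧ FaithfulSMul (MvPolynomial (Fin e) k) R ∧
        IsNoetherNormalization k l fun i => algebraMap (MvPolynomial (Fin e) k) R (X i) := by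
  have hfinite := h.finite hl
  let _ := (aeval y : MvPolynomial (Fin e) k →ₐ[k] R).toRingHom.toAlgebra
  have htower : IsScalarTower k (MvPolynomial (Fin e) k) R :=
    .of_algebraMap_eq' (aeval y : MvPolynomial (Fin e) k →ₐ[k] R).comp_algebraMap.symm
  refine ⟨_, htower, hfinite,
    (faithfulSMul_iff_algebraMap_injective _ _).2 h.algebraicIndependent, ?_⟩
  convert h with i
  exact aeval_X y i

variable {k R ι : Type*} [Field k] [CommRing R] [IsDomain R] [Algebra k R] [Finite ι] {l : ι → R}
  {e : ℕ} [Algebra (MvPolynomial (Fin e) k) R] [IsScalarTower k (MvPolynomial (Fin e) k) R]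

theorem aeval_X_algebraMap {S : Type*} [CommRing S] [Algebra k S] {σ : Type*}
    [Algebra (MvPolynomial σ k) S] [IsScalarTower k (MvPolynomial σ k) S] (f : MvPolynomial σ k) :
    aeval (fun i => algebraMap (MvPolynomial σ k) S (X i)) f = algebraMap _ S f :=
  DFunLike.congr_fun
    (algHom_ext (f := aeval _) (g := IsScalarTower.toAlgHom k _ S) fun i => by simp) f

theorem IsNoetherNormalization.exists_injective_totalDegree_le
    [Module.Finite (MvPolynomial (Fin e) k) R] [FaithfulSMul (MvPolynomial (Fin e) k) R]
    (h : IsNoetherNormalization k l fun i => algebraMap (MvPolynomial (Fin e) k) R (X i)) :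
    ∃ (r C : ℕ) (ψ : R →ₗ[MvPolynomial (Fin e) k] Fin r → MvPolynomial (Fin e) k),
      Function.Injective ψ ∧
        ∀ N, ∀ x ∈ affineSpan k l ^ N, ∀ i, (ψ x i).totalDegree ≤ N + C := by
  obtain ⟨r, ψ, hψ⟩ := exists_injective_linearMap_fin (S := MvPolynomial (Fin e) k) (M := R)
  obtain ⟨c, hc⟩ := h.exists_pow_le
  obtain ⟨C, hC⟩ : ∃ C, ∀ b ∈ affineSpan k l ^ c, ∀ i, (ψ b i).totalDegree ≤ C := by
    obtain ⟨t, ht⟩ := (Submodule.fg_iff_finiteDimensional (affineSpan k l ^ c)).2 inferInstance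
    refine ⟨t.sup fun b => Finset.univ.sup fun i => (ψ b i).totalDegree, fun b hb i => ?_⟩
    rw [← ht] at hb
    induction hb using Submodule.span_induction with
    | mem b hb =>
      exact (Finset.le_sup (f := fun i => (ψ b i).totalDegree) (Finset.mem_univ i)).trans
        (Finset.le_sup (f := fun b => Finset.univ.sup fun i => (ψ b i).totalDegree) hb)
    | zero => simp
    | add b b' _ _ hb hb' =>
      rw [map_add]
      exact (totalDegree_add _ _).trans (max_le hb hb')
    | smul a b _ hb =>
      rw [ψ.map_smul_of_tower]
      exact (totalDegree_smul_le a _).trans hb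
  refine ⟨r, C, ψ, hψ, fun N x hx i => ?_⟩
  refine Submodule.mul_induction_on (hc N hx) ?_ fun x x' hx hx' => by
    rw [map_add]
    exact (totalDegree_add _ _).trans (max_le hx hx')
  intro a ha b hb
  obtain ⟨f, hf, rfl⟩ := mem_affineSpan_pow.1 ha
  rw [aeval_X_algebraMap, ← Algebra.smul_def, map_smul]
  exact (totalDegree_mul _ _).trans (add_le_add hf (hC b hb i))

theorem map_mem_of_mem_ideal_map {S R ι : Type*} [CommRing S] [CommRing R] [Algebra S R]
    (ψ : R →ₗ[S] ι → S) {I : Ideal S} {x : R} (hx : x ∈ I.map (algebraMap S R)) (i : ι) :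
    ψ x i ∈ I := by
  rw [← Submodule.restrictScalars_mem S, ← Ideal.smul_top_eq_map] at hx
  refine Submodule.smul_induction_on hx (fun a ha x _ => ?_) fun x x' hx hx' => ?_
  · rw [map_smul]
    exact I.mul_mem_right _ ha
  · rw [map_add]
    exact I.add_mem hx hx'

theorem IsNoetherNormalization.eq_zero_of_smul_mem_map_pointIdeal_pow
    [Module.Finite (MvPolynomial (Fin e) k) R] [FaithfulSMul (MvPolynomial (Fin e) k) R]
    (h : IsNoetherNormalization k l fun i => algebraMap (MvPolynomial (Fin e) k) R (X i))
    {p : Fin e → k} {g : MvPolynomial (Fin e) k} (hg : eval p g ≠ 0) {D : ℕ} {a : R}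
    (ha : a ∈ affineSpan k l ^ D)
    (hga : g • a ∈ (pointIdeal p ^ (D + 1)).map (algebraMap (MvPolynomial (Fin e) k) R)) :
    a = 0 := by
  obtain ⟨r, C, ψ, hψ, hdeg⟩ := h.exists_injective_totalDegree_le
  have haN : a ^ (C + 1) ∈ affineSpan k l ^ (D * (C + 1)) := by
    rw [pow_mul]
    exact Submodule.pow_mem_pow _ ha _
  have hgaN : g ^ (C + 1) • a ^ (C + 1) ∈
      (pointIdeal p ^ ((D + 1) * (C + 1))).map (algebraMap (MvPolynomial (Fin e) k) R) := by
    rw [← smul_pow, pow_mul, Ideal.map_pow]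
    exact Ideal.pow_mem_pow hga _
  refine eq_zero_of_pow_eq_zero (n := C + 1) (hψ ?_)
  ext1 i
  rw [map_zero]
  have hmem : g ^ (C + 1) * ψ (a ^ (C + 1)) i ∈ pointIdeal p ^ ((D + 1) * (C + 1)) := by
    simpa using map_mem_of_mem_ideal_map ψ hgaN i
  refine eq_zero_of_mem_pointIdeal_pow (mem_pointIdeal_pow_of_mul_mem ?_ hmem)
    ((hdeg _ _ haN i).trans_lt (by linarith))
  rw [map_pow]
  exact pow_ne_zero _ hg

theorem IsNoetherNormalization.exists_linearIndependent_finrank_le [Infinite k]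
    [Module.Finite (MvPolynomial (Fin e) k) R] [FaithfulSMul (MvPolynomial (Fin e) k) R]
    (h : IsNoetherNormalization k l fun i => algebraMap (MvPolynomial (Fin e) k) R (X i)) (D : ℕ) :
    ∃ (r : ℕ) (f : Fin r → R), (∀ i, f i ∈ affineSpan k l ^ D) ∧
      LinearIndependent (MvPolynomial (Fin e) k) f ∧
      Module.finrank k ↥(affineSpan k l ^ D) ≤ r * (D + 1) ^ e := by
  let A := affineSpan k l ^ D
  let v := fun i => (Module.finBasis k A i : R)
  have hAv (a : A) : (a : R) ∈ Submodule.span (MvPolynomial (Fin e) k) (range v) := by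
    have hspan : (a : R) ∈ (Submodule.span k (range (Module.finBasis k A))).map A.subtype := by
      rw [Module.Basis.span_eq]
      exact ⟨a, trivial, rfl⟩
    rw [Submodule.map_span, ← range_comp] at hspan
    exact Submodule.span_subset_span k _ _ hspan
  obtain ⟨r, w, hw, g, hg, c, hc⟩ :=
    exists_linearIndependent_smul_eq_sum (S := MvPolynomial (Fin e) k) v
  refine ⟨r, v ∘ w, fun i => Subtype.coe_prop (Module.finBasis k A (w i)), hw, ?_⟩
  obtain ⟨p, hp⟩ : ∃ p, eval p g ≠ 0 := by
    by_contra! hg0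
    exact hg (MvPolynomial.funext fun p => by rw [hg0, map_zero])
  obtain ⟨φ, hφ⟩ := exists_linearMap_ker_le_pointIdeal_pow p D
  let coords : A →ₗ[k] Fin r → MvPolynomial (Fin e) k := c.restrictScalars k ∘ₗ
    A.subtype.codRestrict ((Submodule.span _ (range v)).restrictScalars k) hAv
  have hcoords (a : A) : g • (a : R) = ∑ i, coords a i • v (w i) := hc ⟨a, hAv a⟩
  let taylor : A →ₗ[k] Fin r → (Fin e → Fin (D + 1)) → k :=
    LinearMap.pi fun i => φ ∘ₗ LinearMap.proj i ∘ₗ coords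
  have htaylor : Function.Injective taylor := (injective_iff_map_eq_zero _).2 fun a ha => by
    refine Subtype.ext (h.eq_zero_of_smul_mem_map_pointIdeal_pow hp a.2 ?_)
    rw [hcoords]
    refine Ideal.sum_mem _ fun i _ => ?_
    rw [Algebra.smul_def]
    exact Ideal.mul_mem_right _ _ (Ideal.mem_map_of_mem _ (hφ _ (congrFun ha i)))
  simpa [Module.finrank_pi_fintype] using LinearMap.finrank_le_finrank_of_injective htaylor

theorem IsNoetherNormalization.succ_pow_mul_finrank_le [Infinite k]
    [Module.Finite (MvPolynomial (Fin e) k) R] [FaithfulSMul (MvPolynomial (Fin e) k) R]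
    (h : IsNoetherNormalization k l fun i => algebraMap (MvPolynomial (Fin e) k) R (X i))
    (D t : ℕ) :
    (t + 1) ^ e * Module.finrank k ↥(affineSpan k l ^ D) ≤
      (D + 1) ^ e * Module.finrank k ↥(affineSpan k l ^ (e * t + D)) := by
  obtain ⟨r, f, hf, hli, hrank⟩ := h.exists_linearIndependent_finrank_le D
  obtain ⟨b, hb, hdeg⟩ := exists_linearIndependent_totalDegree_le k e t
  have hmem (ij : (Fin e → Fin (t + 1)) × Fin r) :
      b ij.1 • f ij.2 ∈ affineSpan k l ^ (e * t + D) := by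
    rw [Algebra.smul_def, pow_add, ← aeval_X_algebraMap]
    exact Submodule.mul_mem_mul (aeval_mem_pow (one_mem_affineSpan l) h.mem (hdeg _)) (hf _)
  have hli' : LinearIndependent k fun ij => (⟨_, hmem ij⟩ : ↥(affineSpan k l ^ (e * t + D))) :=
    .of_comp (Submodule.subtype _) (linearIndependent_smul hb hli)
  have hr : (t + 1) ^ e * r ≤ Module.finrank k ↥(affineSpan k l ^ (e * t + D)) := by
    simpa using hli'.fintype_card_le_finrank
  calc _ ≤ (t + 1) ^ e * (r * (D + 1) ^ e) := Nat.mul_le_mul_left _ hrank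
    _ = (D + 1) ^ e * ((t + 1) ^ e * r) := by ring
    _ ≤ _ := Nat.mul_le_mul_left _ hr

theorem IsNoetherNormalization.finrank_le [Infinite k]
    [Module.Finite (MvPolynomial (Fin e) k) R] [FaithfulSMul (MvPolynomial (Fin e) k) R]
    (h : IsNoetherNormalization k l fun i => algebraMap (MvPolynomial (Fin e) k) R (X i)) (D : ℕ) :
    Module.finrank k ↥(affineSpan k l ^ D) ≤
      Module.finrank (MvPolynomial (Fin e) k) R * (D + 1) ^ e := by
  obtain ⟨r, f, -, hli, hrank⟩ := h.exists_linearIndependent_finrank_le D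
  have hr : r ≤ Module.finrank (MvPolynomial (Fin e) k) R := by
    simpa using hli.fintype_card_le_finrank
  exact hrank.trans (Nat.mul_le_mul_right _ hr)

theorem HasDim.succ_pow_mul_hilbertFunction_le {σ : Type*} [Finite σ] [Infinite k]
    {Q : Ideal (MvPolynomial σ k)} [Q.IsPrime] (h : HasDim Q e) (D t : ℕ) :
    (t + 1) ^ e * hilbertFunction Q D ≤ (D + 1) ^ e * hilbertFunction Q (e * t + D) := by
  obtain ⟨y, hy⟩ := h
  obtain ⟨_, _, _, _, hy'⟩ := hy.exists_algebra (aeval_quotientVars_surjective Q)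
  exact hy'.succ_pow_mul_finrank_le D t

end Growth

section HilbertFunctionBounds

variable {n : ℕ} {k : Type*} [Field k] {Q P : Ideal (MvPolynomial (Fin n) k)} {d : ℕ}

theorem hilbertFunction_le_succ_pow (J : Ideal (MvPolynomial (Fin n) k)) (D : ℕ) :
    hilbertFunction J D ≤ (D + 1) ^ n :=
  finrank_affineSpan_pow_le _ _

theorem hilbertFunction_pos (J : Ideal (MvPolynomial (Fin n) k)) [J.IsPrime] (D : ℕ) :
    0 < hilbertFunction J D := by
  rw [hilbertFunction, Module.finrank_pos_iff_exists_ne_zero]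
  exact ⟨⟨1, one_mem_affineSpan_pow _ D⟩, fun h => one_ne_zero (congrArg Subtype.val h)⟩

variable [Infinite k]

theorem exists_isPrime_pow_mul_hilbertFunction_le [Q.IsPrime] (hQ : HasDim Q d) (T : ℕ) {m : ℕ}
    (hm : m + d ≤ n) :
    ∃ P : Ideal (MvPolynomial (Fin n) k), P.IsPrime ∧ P ≤ Q ∧ HasDim P (n - m) ∧ ∀ D,
      T ^ m * hilbertFunction P D ≤
        (∏ i ∈ Finset.Icc 1 m, codimDegree Q i) * (D + m * T + 1) ^ n := by
  induction m with
  | zero =>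
    exact ⟨⊥, Ideal.isPrime_bot, bot_le, hasDim_bot, fun D => by
      simpa using hilbertFunction_le_succ_pow ⊥ D⟩
  | succ m ih =>
    obtain ⟨P, hP, hPQ, hPdim, hPle⟩ := ih (by omega)
    obtain ⟨f, hfQ, hdeg, hfP⟩ := exists_notMem_of_codimDegree hQ hm hPQ hPdim (by omega)
    rw [show n - m = n - (m + 1) + 1 by omega] at hPdim
    obtain ⟨P', hP', hPP', hfP', hP'Q, hP'dim⟩ := exists_isPrime_between_hasDim hPQ hfQ hfP hPdim
    refine ⟨P', hP', hP'Q, hP'dim, fun D => ?_⟩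
    have hmul := mul_hilbertFunction_le hPP'
      (fun g hg => (hP.mem_or_mem hg).resolve_right hfP) hfP' hdeg
      (codimDegree_pos hQ hm m.succ_pos) D T
    rw [Finset.prod_Icc_succ_top (by omega), pow_succ]
    calc T ^ m * T * hilbertFunction P' D = T ^ m * (T * hilbertFunction P' D) := mul_assoc _ _ _
      _ ≤ T ^ m * (codimDegree Q (m + 1) * hilbertFunction P (D + T)) :=
        Nat.mul_le_mul_left _ hmul
      _ = codimDegree Q (m + 1) * (T ^ m * hilbertFunction P (D + T)) := by ring
      _ ≤ codimDegree Q (m + 1) * _ := Nat.mul_le_mul_left _ (hPle (D + T))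
      _ = _ := by ring

theorem HasDim.hilbertFunction_le_mul_prod_codimDegree [Q.IsPrime] {m : ℕ} (hm : m ≤ n)
    (hQ : HasDim Q (n - m)) {T : ℕ} (hT : 0 < T) :
    hilbertFunction Q T ≤
      (n + 2) ^ n * T ^ (n - m) * ∏ i ∈ Finset.Icc 1 m, codimDegree Q i := by
  obtain ⟨P, hP, hPQ, hPdim, hPle⟩ :=
    exists_isPrime_pow_mul_hilbertFunction_le hQ T (Nat.add_sub_of_le hm).le
  obtain rfl : P = Q := by
    by_contra hne
    exact (hPdim.lt hQ (lt_of_le_of_ne hPQ hne)).false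
  refine Nat.le_of_mul_le_mul_left ?_ (pow_pos hT m)
  calc T ^ m * hilbertFunction P T
      ≤ (∏ i ∈ Finset.Icc 1 m, codimDegree P i) * (T + m * T + 1) ^ n := hPle T
    _ ≤ (∏ i ∈ Finset.Icc 1 m, codimDegree P i) * ((n + 2) * T) ^ n := by
      gcongr
      nlinarith
    _ = (∏ i ∈ Finset.Icc 1 m, codimDegree P i) * ((n + 2) ^ n * T ^ (m + (n - m))) := by
      rw [Nat.add_sub_of_le hm, mul_pow]
    _ = _ := by ring

theorem HasDim.pow_mul_hilbertFunction_le [P.IsPrime] {e : ℕ} (hP : HasDim P e) (hPQ : P ≤ Q)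
    {a b : ℕ} (ha : 0 < a) (hab : a ≤ b) (hdeg : ∀ f ∈ Q, f ∉ P → b ≤ f.totalDegree) :
    b ^ e * hilbertFunction Q a ≤ (2 * (e + 1)) ^ e * a ^ e * hilbertFunction Q b := by
  by_cases hb : b ≤ (e + 1) * a
  · rw [← mul_pow]
    gcongr
    · nlinarith
    · exact hilbertFunction_mono Q hab
  obtain rfl | he := eq_or_ne e 0
  · simpa using hilbertFunction_mono Q hab
  have heq {D : ℕ} (hD : D < b) : hilbertFunction P D = hilbertFunction Q D :=
    hilbertFunction_eq_of_mem hPQ fun f hf hfD => by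
      by_contra hfP
      exact (hdeg f hf hfP).not_gt (hfD.trans_lt hD)
  set t := (b - 1 - a) / e with ht
  have htb : e * t ≤ b - 1 - a := Nat.mul_div_le _ _
  have hbt : b - 1 - a < e * (t + 1) := Nat.lt_mul_div_succ _ (Nat.pos_of_ne_zero he)
  have hat : a ≤ t + 1 :=
    le_of_mul_le_mul_left (a := e) (by rw [not_le, add_one_mul] at hb; lia) (Nat.pos_of_ne_zero he)
  have hgrowth := hP.succ_pow_mul_hilbertFunction_le a t
  rw [heq (by lia), heq (by lia)] at hgrowth
  calc b ^ e * hilbertFunction Q a ≤ ((e + 1) * (t + 1)) ^ e * hilbertFunction Q a := by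
        gcongr
        lia
    _ = (e + 1) ^ e * ((t + 1) ^ e * hilbertFunction Q a) := by rw [mul_pow, mul_assoc]
    _ ≤ (e + 1) ^ e * ((2 * a) ^ e * hilbertFunction Q b) := by
      refine Nat.mul_le_mul_left _ (hgrowth.trans ?_)
      gcongr
      · lia
      · exact hilbertFunction_mono Q (by lia)
    _ = _ := by
      simp only [mul_pow]
      ring

theorem HasDim.pow_mul_prod_codimDegree_le [Q.IsPrime] (hQ : HasDim Q d) {m : ℕ} (hm : 1 ≤ m)
    (hmd : m + d ≤ n) :
    codimDegree Q m ^ (n - m) * ∏ i ∈ Finset.Icc 1 m, codimDegree Q i ≤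
      (2 * (n + 1)) ^ (n * m) * hilbertFunction Q (codimDegree Q m) := by
  have step {s a : ℕ} (hs : s + 1 + d ≤ n) (ha : 0 < a) (hab : a ≤ codimDegree Q (s + 1)) :
      codimDegree Q (s + 1) ^ (n - s) * hilbertFunction Q a ≤
        (2 * (n + 1)) ^ n * a ^ (n - s) * hilbertFunction Q (codimDegree Q (s + 1)) := by
    obtain ⟨P, hP, hPQ, hPdim, hdeg⟩ := exists_isPrime_hasDim_codimDegree_le hQ (s := s) (by omega)
    refine (hPdim.pow_mul_hilbertFunction_le hPQ ha hab hdeg).trans ?_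
    gcongr <;> omega
  induction m, hm using Nat.le_induction with
  | base =>
    have hstep := step hmd one_pos (codimDegree_pos hQ hmd one_pos)
    simp only [zero_add, Nat.sub_zero, one_pow, mul_one] at hstep
    rw [Finset.Icc_self, Finset.prod_singleton, ← pow_succ, Nat.sub_add_cancel (by omega), mul_one]
    exact (Nat.le_mul_of_pos_right _ (hilbertFunction_pos Q 1)).trans hstep
  | succ m hm ih =>
    have hpos := codimDegree_pos hQ (i := m) (by omega) hm
    have hstep := step hmd hpos (codimDegree_mono hQ m.le_succ hmd)
    refine Nat.le_of_mul_le_mul_left ?_ (pow_pos hpos (n - m))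
    set δ := codimDegree Q
    calc δ m ^ (n - m) * (δ (m + 1) ^ (n - (m + 1)) * ∏ i ∈ Finset.Icc 1 (m + 1), δ i)
        = δ (m + 1) ^ (n - (m + 1) + 1) * (δ m ^ (n - m) * ∏ i ∈ Finset.Icc 1 m, δ i) := by
          rw [Finset.prod_Icc_succ_top (by omega)]
          ring
      _ ≤ δ (m + 1) ^ (n - m) * ((2 * (n + 1)) ^ (n * m) * hilbertFunction Q (δ m)) := by
          rw [show n - (m + 1) + 1 = n - m by omega]
          exact Nat.mul_le_mul_left _ (ih (by omega))
      _ = (2 * (n + 1)) ^ (n * m) * (δ (m + 1) ^ (n - m) * hilbertFunction Q (δ m)) := by ring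
      _ ≤ (2 * (n + 1)) ^ (n * m) *
            ((2 * (n + 1)) ^ n * δ m ^ (n - m) * hilbertFunction Q (δ (m + 1))) :=
          Nat.mul_le_mul_left _ hstep
      _ = _ := by ring

end HilbertFunctionBounds

section DegreeUpperBound

variable {k : Type*} [Field k] {n : ℕ}

theorem span_range_eq_sup_span_range_tail {R : Type*} [CommRing R] {e : ℕ} (y : Fin (e + 1) → R) :
    Ideal.span (range y) = Ideal.span {y 0} ⊔ Ideal.span (range (Fin.tail y)) := by
  rw [Fin.range_fin_succ, Ideal.span_insert]

theorem exists_mem_dimsBetween_sup_span_range [Infinite k] {J Q : Ideal (MvPolynomial (Fin n) k)}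
    [Q.IsPrime] {d : ℕ} (hd : d ∈ dimsBetween J Q) {e : ℕ} (y : Fin e → MvPolynomial (Fin n) k)
    (hy : ∀ i, y i ∈ Q) : ∃ d' ∈ dimsBetween (J ⊔ Ideal.span (range y)) Q, d ≤ d' + e := by
  induction e generalizing J d with
  | zero => exact ⟨d, by simpa using hd, le_rfl⟩
  | succ e ih =>
    obtain ⟨d₁, hd₁, hle₁⟩ := exists_mem_dimsBetween_sup_span hd (hy 0)
    obtain ⟨d₂, hd₂, hle₂⟩ := ih hd₁ (Fin.tail y) fun i => hy i.succ
    rw [sup_assoc, ← span_range_eq_sup_span_range_tail] at hd₂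
    exact ⟨d₂, hd₂, by omega⟩

theorem HasDim.notMem_of_dimsBetween_sup_span_subset [Infinite k]
    {Q M : Ideal (MvPolynomial (Fin n) k)} [Q.IsPrime] [M.IsPrime] {e : ℕ} (hQ : HasDim Q (e + 1))
    (hQM : Q ≤ M) {y : Fin (e + 1) → MvPolynomial (Fin n) k} (hy : ∀ i, y i ∈ M)
    (hdim : dimsBetween (Q ⊔ Ideal.span (range y)) M ⊆ {0}) : y 0 ∉ Q := fun hmem => by
  obtain ⟨d, hd, hle⟩ := exists_mem_dimsBetween_sup_span_range ⟨Q, ‹_›, le_rfl, hQM, hQ⟩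
    (Fin.tail y) fun i => hy i.succ
  have hspan : Q ⊔ Ideal.span (range y) = Q ⊔ Ideal.span (range (Fin.tail y)) := by
    rw [span_range_eq_sup_span_range_tail, ← sup_assoc,
      sup_of_le_left ((Ideal.span_singleton_le_iff_mem Q).2 hmem)]
  obtain rfl : d = 0 := hdim (hspan ▸ hd)
  omega

/-- The components of the sections by `f` of the varieties of the members of `𝓠`, as far as they
pass through the variety of a member of `𝓜`. -/
def cutPrimes (𝓠 𝓜 : Set (Ideal (MvPolynomial (Fin n) k))) (f : MvPolynomial (Fin n) k) :
    Set (Ideal (MvPolynomial (Fin n) k)) :=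
  {P | (∃ Q ∈ 𝓠, P ∈ (Q ⊔ Ideal.span {f}).minimalPrimes) ∧ ∃ M ∈ 𝓜, P ≤ M}

theorem hasDim_of_mem_cutPrimes [Infinite k] {𝓠 𝓜 : Set (Ideal (MvPolynomial (Fin n) k))}
    {P : Ideal (MvPolynomial (Fin n) k)} {e : ℕ} {f : MvPolynomial (Fin n) k}
    (h𝓠 : ∀ Q ∈ 𝓠, Q.IsPrime ∧ HasDim Q (e + 1)) (hf : ∀ Q ∈ 𝓠, f ∉ Q)
    (hP : P ∈ cutPrimes 𝓠 𝓜 f) : HasDim P e := by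
  obtain ⟨⟨Q, hQ, hP⟩, -⟩ := hP
  obtain ⟨hQ', hQd⟩ := h𝓠 Q hQ
  have := hP.isPrime
  obtain ⟨d, -, hd⟩ := exists_hasDim P
  obtain rfl := Nat.succ_injective (hd.add_one_eq_of_mem_minimalPrimes (hf Q hQ) hP hQd)
  exact hd

theorem exists_mem_cutPrimes_le {𝓠 𝓜 : Set (Ideal (MvPolynomial (Fin n) k))}
    {M Q : Ideal (MvPolynomial (Fin n) k)} [M.IsPrime] {f : MvPolynomial (Fin n) k}
    (hM : M ∈ 𝓜) (hQ : Q ∈ 𝓠) (hQM : Q ≤ M) (hf : f ∈ M) : ∃ P ∈ cutPrimes 𝓠 𝓜 f, P ≤ M :=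
  let ⟨P, hP, hPM⟩ :=
    Ideal.exists_minimalPrimes_le (sup_le hQM ((Ideal.span_singleton_le_iff_mem M).2 hf))
  ⟨P, ⟨⟨Q, hQ, hP⟩, M, hM, hPM⟩, hPM⟩

theorem mul_hilbertFunction_sInf_cutPrimes_le {𝓠 𝓜 : Set (Ideal (MvPolynomial (Fin n) k))}
    {f : MvPolynomial (Fin n) k} (h𝓠 : ∀ Q ∈ 𝓠, Q.IsPrime ∧ f ∉ Q) (hdeg : f.totalDegree ≤ 1)
    (D T : ℕ) :
    T * hilbertFunction (sInf (cutPrimes 𝓠 𝓜 f)) D ≤ hilbertFunction (sInf 𝓠) (D + T) := by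
  rw [← one_mul (hilbertFunction (sInf 𝓠) (D + T))]
  refine mul_hilbertFunction_le (g := f) ?_ ?_ ?_ hdeg one_pos D T
  · exact le_sInf fun P ⟨⟨Q, hQ, hP⟩, _⟩ => (sInf_le hQ).trans (le_sup_left.trans hP.le)
  · simp only [Ideal.mem_sInf]
    exact fun g hg Q hQ => ((h𝓠 Q hQ).1.mem_or_mem (hg hQ)).resolve_right (h𝓠 Q hQ).2
  · rw [Ideal.mem_sInf]
    exact fun P ⟨⟨Q, _, hP⟩, _⟩ => hP.le (Ideal.mem_sup_right (Ideal.mem_span_singleton_self f))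

theorem pow_mul_hilbertFunction_sInf_le [Infinite k] {𝓠 𝓜 : Set (Ideal (MvPolynomial (Fin n) k))}
    {e : ℕ} (h𝓠 : ∀ Q ∈ 𝓠, Q.IsPrime ∧ HasDim Q e ∧ ∃ M ∈ 𝓜, Q ≤ M)
    (h𝓜 : ∀ M ∈ 𝓜, M.IsPrime ∧ ∃ Q ∈ 𝓠, Q ≤ M) (y : Fin e → MvPolynomial (Fin n) k)
    (hdeg : ∀ i, (y i).totalDegree ≤ 1) (hy : ∀ i, ∀ M ∈ 𝓜, y i ∈ M)
    (hdim : ∀ Q ∈ 𝓠, ∀ M ∈ 𝓜, dimsBetween (Q ⊔ Ideal.span (range y)) M ⊆ {0}) (D T : ℕ) :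
    D ^ e * hilbertFunction (sInf 𝓜) T ≤ hilbertFunction (sInf 𝓠) (T + e * D) := by
  induction e generalizing 𝓠 with
  | zero =>
    have hle : sInf 𝓠 ≤ sInf 𝓜 := le_sInf fun M hM =>
      let ⟨_, Q, hQ, hQM⟩ := h𝓜 M hM
      (sInf_le hQ).trans hQM
    simpa using hilbertFunction_anti hle T
  | succ e ih =>
    have hy0 (Q) (hQ : Q ∈ 𝓠) : y 0 ∉ Q := by
      obtain ⟨hQ', hQd, M, hM, hQM⟩ := h𝓠 Q hQ
      have := (h𝓜 M hM).1
      exact hQd.notMem_of_dimsBetween_sup_span_subset hQM (fun i => hy i M hM) (hdim Q hQ M hM)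
    have hind : D ^ e * hilbertFunction (sInf 𝓜) T ≤
        hilbertFunction (sInf (cutPrimes 𝓠 𝓜 (y 0))) (T + e * D) := by
      refine ih (fun P hP => ⟨?_, ?_, hP.2⟩) (fun M hM => ?_) (Fin.tail y) (fun i => hdeg i.succ)
        (fun i => hy i.succ) ?_
      · obtain ⟨⟨Q, -, hP⟩, -⟩ := hP
        exact hP.isPrime
      · exact hasDim_of_mem_cutPrimes (fun Q hQ => ⟨(h𝓠 Q hQ).1, (h𝓠 Q hQ).2.1⟩) hy0 hP
      · obtain ⟨hM', Q, hQ, hQM⟩ := h𝓜 M hM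
        exact ⟨hM', exists_mem_cutPrimes_le hM hQ hQM (hy 0 M hM)⟩
      · rintro P ⟨⟨Q, hQ, hP⟩, -⟩ M hM
        refine (dimsBetween_subset ?_ le_rfl).trans (hdim Q hQ M hM)
        rw [span_range_eq_sup_span_range_tail, ← sup_assoc]
        exact sup_le_sup_right hP.le _
    have hmul := mul_hilbertFunction_sInf_cutPrimes_le (𝓜 := 𝓜)
      (fun Q hQ => ⟨(h𝓠 Q hQ).1, hy0 Q hQ⟩) (hdeg 0) (T + e * D) D
    calc D ^ (e + 1) * hilbertFunction (sInf 𝓜) T = D * (D ^ e * hilbertFunction (sInf 𝓜) T) := by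
          ring
      _ ≤ D * hilbertFunction (sInf (cutPrimes 𝓠 𝓜 (y 0))) (T + e * D) :=
        Nat.mul_le_mul_left _ hind
      _ ≤ hilbertFunction (sInf 𝓠) (T + (e + 1) * D) := by rwa [add_one_mul, ← add_assoc]

theorem exists_totalDegree_le_one_eval {p q : Fin n → k} (hpq : p ≠ q) :
    ∃ f : MvPolynomial (Fin n) k, f.totalDegree ≤ 1 ∧ eval p f = 1 ∧ eval q f = 0 := by
  obtain ⟨j, hj⟩ := Function.ne_iff.1 hpq
  refine ⟨C (p j - q j)⁻¹ * (X j - C (q j)), ?_, ?_, by simp⟩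
  · refine (totalDegree_mul _ _).trans ?_
    rw [totalDegree_C, zero_add, ← totalDegree_X (R := k) j]
    exact totalDegree_sub_C_le _ _
  · simp [sub_ne_zero.2 hj]

theorem card_le_hilbertFunction {J : Ideal (MvPolynomial (Fin n) k)} {F : Finset (Fin n → k)}
    (hJ : ∀ p ∈ F, J ≤ pointIdeal p) {D : ℕ} (hD : F.card ≤ D) : F.card ≤ hilbertFunction J D := by
  classical
  choose! g hgdeg hgp hgq using
    fun p q : Fin n → k => exists_totalDegree_le_one_eval (p := p) (q := q)
  let lagrange (p : Fin n → k) : MvPolynomial (Fin n) k := ∏ q ∈ F.erase p, g p q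
  have hdeg (p) : (lagrange p).totalDegree ≤ D :=
    calc (lagrange p).totalDegree ≤ ∑ q ∈ F.erase p, (g p q).totalDegree :=
          totalDegree_finsetProd _ _
      _ ≤ (F.erase p).card • 1 :=
          Finset.sum_le_card_nsmul _ _ _ fun q hq => hgdeg p q (Finset.ne_of_mem_erase hq).symm
      _ ≤ D := by simpa using (Finset.card_le_card (F.erase_subset p)).trans hD
  have heval_self (p) : eval p (lagrange p) = 1 := by
    rw [eval_prod]
    exact Finset.prod_eq_one fun q hq => hgp p q (Finset.ne_of_mem_erase hq).symm
  have heval_ne {p q} (hq : q ∈ F) (hqp : q ≠ p) : eval q (lagrange p) = 0 := by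
    rw [eval_prod]
    exact Finset.prod_eq_zero (Finset.mem_erase.2 ⟨hqp, hq⟩) (hgq p q hqp.symm)
  let w (p : F) : ↥(affineSpan k (quotientVars J) ^ D) :=
    ⟨Ideal.Quotient.mk J (lagrange p), mem_affineSpan_quotientVars_pow.2 ⟨_, hdeg p, rfl⟩⟩
  have hw : LinearIndependent k w := by
    rw [Fintype.linearIndependent_iff]
    intro c hc q
    have hmem : ∑ p : F, c p • lagrange p ∈ J := by
      rw [← Ideal.Quotient.eq_zero_iff_mem, map_sum]
      have hsum := congrArg Subtype.val hc
      simp only [w, AddSubmonoidClass.coe_finsetSum] at hsum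
      exact hsum
    have heval := mem_pointIdeal.1 (hJ q q.2 hmem)
    rw [map_sum, Finset.sum_eq_single q] at heval
    · simpa [smul_eval, heval_self] using heval
    · intro p _ hpq
      rw [smul_eval, heval_ne q.2 (Subtype.coe_injective.ne hpq.symm), mul_zero]
    · simp
  simpa [hilbertFunction] using hw.fintype_card_le_finrank

theorem HasDim.pow_mul_card_le [Infinite k] {Q : Ideal (MvPolynomial (Fin n) k)} [Q.IsPrime]
    {e : ℕ} (hQ : HasDim Q e) {F : Finset (Fin n → k)} (hF : ∀ p ∈ F, Q ≤ pointIdeal p)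
    {y : Fin e → MvPolynomial (Fin n) k} (hdeg : ∀ i, (y i).totalDegree ≤ 1)
    (hy : ∀ i, ∀ p ∈ F, eval p (y i) = 0)
    (hdim : ∀ p ∈ F, dimsBetween (Q ⊔ Ideal.span (range y)) (pointIdeal p) ⊆ {0}) {D : ℕ}
    (hD : F.card ≤ D) : D ^ e * F.card ≤ hilbertFunction Q ((e + 1) * D) := by
  obtain rfl | ⟨p, hp⟩ := F.eq_empty_or_nonempty
  · simp
  have hF' (p) (hp : p ∈ F) : sInf (pointIdeal '' F) ≤ pointIdeal p :=
    sInf_le (mem_image_of_mem _ hp)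
  have hcut := pow_mul_hilbertFunction_sInf_le (𝓠 := {Q}) (𝓜 := pointIdeal '' F)
    (fun _ hQ' => hQ' ▸ ⟨‹_›, hQ, _, mem_image_of_mem _ hp, hF p hp⟩)
    (forall_mem_image.2 fun p hp => ⟨(pointIdeal_isMaximal p).isPrime, Q, rfl, hF p hp⟩)
    y hdeg (fun i => forall_mem_image.2 fun p hp => mem_pointIdeal.2 (hy i p hp))
    (fun _ hQ' => hQ' ▸ forall_mem_image.2 hdim) D D
  rw [sInf_singleton, ← one_add_mul, add_comm 1] at hcut
  exact (Nat.mul_le_mul_left _ (card_le_hilbertFunction hF' hD)).trans hcut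

theorem exists_linear_equations (L : AffineSubspace k (Fin n → k))
    (hL : (L : Set (Fin n → k)).Nonempty) {e : ℕ} (he : Module.finrank k L.direction + e = n) :
    ∃ y : Fin e → MvPolynomial (Fin n) k, (∀ i, (y i).totalDegree ≤ 1) ∧
      ∀ x, x ∈ L ↔ ∀ i, eval x (y i) = 0 := by
  obtain ⟨p, hp⟩ := hL
  have hquot : Module.finrank k ((Fin n → k) ⧸ L.direction) = e := by
    have := L.direction.finrank_quotient_add_finrank
    rw [Module.finrank_fin_fun] at this
    omega
  let φ : (Fin n → k) →ₗ[k] Fin e → k :=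
    (Module.finBasisOfFinrankEq k _ hquot).equivFun.toLinearMap ∘ₗ L.direction.mkQ
  have hφ (x) : x ∈ L ↔ φ (x - p) = 0 := by
    rw [← AffineSubspace.vsub_right_mem_direction_iff_mem hp, vsub_eq_sub]
    rw [← L.direction.ker_mkQ]
    simp [φ, -map_sub, -Submodule.ker_mkQ]
  refine ⟨fun i => (LinearMap.toMatrix' φ).toMvPolynomial i - C (φ p i), fun i => ?_, fun x => ?_⟩
  · exact (totalDegree_sub_C_le _ _).trans (Matrix.toMvPolynomial_totalDegree_le _ i)
  · simp [hφ, _root_.funext_iff, sub_eq_zero, Matrix.toMvPolynomial_eval_eq_apply]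

theorem HasDim.eq_zero_of_finite {Q : Ideal (MvPolynomial (Fin n) ℂ)} [Q.IsPrime] {e : ℕ}
    (hQ : HasDim Q e) (hfin : (zeroLocus n Q).Finite) : e = 0 := by
  by_contra he
  obtain ⟨e, rfl⟩ := Nat.exists_eq_add_one_of_ne_zero he
  have hle : hfin.toFinset.inf pointIdeal ≤ Q := fun f hf => by
    rw [← vanishingIdeal_zeroLocus Q]
    exact fun x hx => mem_pointIdeal.1 (Submodule.mem_finsetInf.1 hf x (hfin.mem_toFinset.2 hx))
  obtain ⟨x, -, hx⟩ := (Ideal.IsPrime.inf_le' ‹_›).1 hle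
  have hxQ := (pointIdeal_isMaximal x).eq_of_le (Ideal.IsPrime.ne_top ‹_›) hx
  exact hQ.not_isMaximal (hxQ ▸ pointIdeal_isMaximal x)

variable {W : Set (Fin n → ℂ)}

theorem IsIrredVariety.pow_mul_ncard_le (hW : IsIrredVariety n W) {L : AffineSubspace ℂ (Fin n → ℂ)}
    (hL : Module.finrank ℂ L.direction = n - dim n W) (hfin : (W ∩ L).Finite) {D : ℕ}
    (hD : (W ∩ L).ncard ≤ D) :
    D ^ dim n W * (W ∩ L).ncard ≤ hilbertFunction (vanishingIdeal n W) ((dim n W + 1) * D) := by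
  obtain hempty | hne := (W ∩ L).eq_empty_or_nonempty
  · simp [hempty]
  have hle (x) : vanishingIdeal n W ≤ pointIdeal x ↔ x ∈ W := by
    conv_rhs => rw [← hW.1.zeroLocus_vanishingIdeal]
    exact forall₂_congr fun _ _ => mem_pointIdeal
  obtain ⟨y, hdeg, hy⟩ := exists_linear_equations L (hne.mono inter_subset_right) (e := dim n W)
    (by have := hW.dim_le; omega)
  have := hW.isPrime
  have hdim (x) : dimsBetween (vanishingIdeal n W ⊔ Ideal.span (range y)) (pointIdeal x) ⊆ {0} := by
    rintro d ⟨P, hP, hWP, -, hPd⟩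
    refine hPd.eq_zero_of_finite (hfin.subset fun z hz => ⟨?_, (hy z).2 fun i => hz _ ?_⟩)
    · exact (hle z).1 (le_sup_left.trans hWP |>.trans fun f hf => mem_pointIdeal.2 (hz f hf))
    · exact hWP (Ideal.mem_sup_right (Ideal.subset_span (mem_range_self i)))
  rw [ncard_eq_toFinset_card _ hfin] at hD ⊢
  have hmem {x} : x ∈ hfin.toFinset ↔ x ∈ W ∩ L := hfin.mem_toFinset
  exact hW.hasDim_dim.pow_mul_card_le (fun x hx => (hle x).2 (hmem.1 hx).1) hdeg
    (fun i x hx => (hy x).1 (hmem.1 hx).2 i) (fun x _ => hdim x) hD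

theorem IsIrredVariety.ncard_inter_le (hW : IsIrredVariety n W) {m : ℕ} (hm : m ≤ n)
    (hdim : dim n W = n - m) {L : AffineSubspace ℂ (Fin n → ℂ)}
    (hL : Module.finrank ℂ L.direction = n - dim n W) (hfin : (W ∩ L).Finite) :
    (W ∩ L).ncard ≤
      (n + 2) ^ n * (n + 1) ^ n * ∏ i ∈ Finset.Icc 1 m, codimDegree (vanishingIdeal n W) i := by
  obtain hzero | hpos := (W ∩ L).ncard.eq_zero_or_pos
  · simp [hzero]
  have := hW.isPrime
  have hcut := hW.pow_mul_ncard_le hL hfin le_rfl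
  rw [hdim] at hcut
  set D := (W ∩ L).ncard
  set δprod := ∏ i ∈ Finset.Icc 1 m, codimDegree (vanishingIdeal n W) i
  refine Nat.le_of_mul_le_mul_left ?_ (pow_pos hpos (n - m))
  calc D ^ (n - m) * D ≤ hilbertFunction (vanishingIdeal n W) ((n - m + 1) * D) := hcut
    _ ≤ (n + 2) ^ n * ((n - m + 1) * D) ^ (n - m) * δprod :=
      (hdim ▸ hW.hasDim_dim).hilbertFunction_le_mul_prod_codimDegree hm (by positivity)
    _ = (n + 2) ^ n * (n - m + 1) ^ (n - m) * D ^ (n - m) * δprod := by rw [mul_pow, ← mul_assoc]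
    _ ≤ (n + 2) ^ n * (n + 1) ^ n * D ^ (n - m) * δprod := by
      gcongr
      · exact n.succ_pos
      all_goals exact n.sub_le m
    _ = D ^ (n - m) * ((n + 2) ^ n * (n + 1) ^ n * δprod) := by ring

theorem IsIrredVariety.degree_le (hW : IsIrredVariety n W) {m : ℕ} (hm : m ≤ n)
    (hdim : dim n W = n - m) : degree n W ≤
      (n + 2) ^ n * (n + 1) ^ n * ∏ i ∈ Finset.Icc 1 m, codimDegree (vanishingIdeal n W) i :=
  csSup_le' fun _ ⟨_, hL, hfin, hcard⟩ => hcard ▸ hW.ncard_inter_le hm hdim hL hfin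

theorem IsIrredVariety.ncard_inter_le_degree (hW : IsIrredVariety n W)
    {L : AffineSubspace ℂ (Fin n → ℂ)} (hL : Module.finrank ℂ L.direction = n - dim n W)
    (hfin : (W ∩ L).Finite) : (W ∩ L).ncard ≤ degree n W :=
  le_csSup ⟨_, fun _ ⟨_, hL, hfin, hcard⟩ => hcard ▸
    hW.ncard_inter_le (Nat.sub_le n (dim n W)) (Nat.sub_sub_self hW.dim_le).symm hL hfin⟩
    ⟨L, hL, hfin, rfl⟩

end DegreeUpperBound

section SimpleExtension

variable {S R : Type*} [CommRing S] [IsDomain S] [IsIntegrallyClosed S] [CommRing R] [IsDomain R]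
  [Algebra S R]

open scoped IntermediateField Polynomial

theorem exists_mul_minpoly_add_mul_derivative_eq_C [CharZero S] {θ : R} (hθ : IsIntegral S θ) :
    ∃ s ≠ 0, ∃ a b : S[X],
      minpoly S θ * a + (minpoly S θ).derivative * b = Polynomial.C s := by
  let F := FractionRing S
  have hinj : Function.Injective (algebraMap S F) := IsFractionRing.injective S F
  have : CharZero F := charZero_of_injective_algebraMap hinj
  have hirr : Irreducible ((minpoly S θ).map (algebraMap S F)) :=
    ((minpoly.monic hθ).irreducible_iff_irreducible_map_fraction_map).1 (minpoly.irreducible hθ)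
  obtain ⟨a, b, -, -, hab⟩ := Polynomial.exists_mul_add_mul_eq_C_resultant (minpoly S θ)
    (minpoly S θ).derivative le_rfl le_rfl (Or.inl (minpoly.natDegree_pos hθ).ne')
  refine ⟨_, fun hzero => Polynomial.resultant_ne_zero _ _ hirr.separable ?_, a, b, hab⟩
  rw [Polynomial.derivative_map, Polynomial.natDegree_map_eq_of_injective hinj,
    Polynomial.natDegree_map_eq_of_injective hinj, Polynomial.resultant_map_map, hzero, map_zero]

variable [FaithfulSMul S R]

theorem exists_natDegree_minpoly_eq_finrank [CharZero S] [Module.Finite S R] :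
    ∃ θ : R, (minpoly S θ).natDegree = Module.finrank S R := by
  let F := FractionRing S
  let K := FractionRing R
  let _ : Algebra F K := FractionRing.liftAlgebra S K
  have : CharZero F := charZero_of_injective_algebraMap (IsFractionRing.injective S F)
  have : FiniteDimensional F K := Module.Finite.of_isLocalization S R (nonZeroDivisors S)
  obtain ⟨α, hα⟩ := Field.exists_primitive_element F K
  obtain ⟨⟨θ, ⟨_, ⟨s, hs, rfl⟩⟩⟩, hθ⟩ :=
    IsLocalization.surj (Algebra.algebraMapSubmonoid R (nonZeroDivisors S)) α
  have hs0 : algebraMap S F s ≠ 0 :=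
    IsFractionRing.to_map_ne_zero_of_mem_nonZeroDivisors hs
  have hαθ : α = (algebraMap S F s)⁻¹ • algebraMap R K θ := by
    rw [← hθ, eq_inv_smul_iff₀ hs0, Algebra.smul_def, ← IsScalarTower.algebraMap_apply S F K,
      ← IsScalarTower.algebraMap_apply S R K, mul_comm]
  have htop : F⟮algebraMap R K θ⟯ = ⊤ := by
    rw [eq_top_iff, ← hα, IntermediateField.adjoin_simple_le_iff, hαθ]
    exact IntermediateField.smul_mem _ (IntermediateField.mem_adjoin_simple_self F _)
  have hI : IsIntegral S θ := Algebra.IsIntegral.isIntegral θ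
  have hdeg := (Field.primitive_element_iff_minpoly_natDegree_eq F _).1 htop
  rw [minpoly.isIntegrallyClosed_eq_field_fractions F K hI,
    (minpoly.monic hI).natDegree_map, IsFractionRing.finrank_eq S F R K] at hdeg
  exact ⟨θ, hdeg⟩

theorem exists_isPrime_aeval_mem_of_eval₂_minpoly_eq_zero [Algebra.IsIntegral S R] {k : Type*}
    [CommRing k] [IsDomain k] (θ : R) (φ : S →+* k) {t : k} (ht : (minpoly S θ).eval₂ φ t = 0) :
    ∃ N : Ideal R, N.IsPrime ∧ ∀ f : S[X], f.eval₂ φ t = 0 → Polynomial.aeval θ f ∈ N := by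
  let _ := (Polynomial.aeval θ : S[X] →ₐ[S] R).toRingHom.toAlgebra
  have : IsScalarTower S S[X] R :=
    IsScalarTower.of_algebraMap_eq' (Polynomial.aeval θ).comp_algebraMap.symm
  have : Algebra.IsIntegral S[X] R := Algebra.IsIntegral.tower_top S
  have hker : RingHom.ker (algebraMap S[X] R) ≤ RingHom.ker (Polynomial.eval₂RingHom φ t) :=
    fun f hf => by
      obtain ⟨g, rfl⟩ := minpoly.isIntegrallyClosed_dvd (Algebra.IsIntegral.isIntegral θ) hf
      rw [RingHom.mem_ker, map_mul, Polynomial.coe_eval₂RingHom, ht, zero_mul]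
  have := RingHom.ker_isPrime (Polynomial.eval₂RingHom φ t)
  obtain ⟨N, -, hN, hNP⟩ := Ideal.exists_ideal_over_prime_of_isIntegral
    (RingHom.ker (Polynomial.eval₂RingHom φ t)) (⊥ : Ideal R) hker
  exact ⟨N, hN, fun f hf => hNP.ge hf⟩

end SimpleExtension

section Fibre

variable {k : Type*} [Field k] [CharZero k] {e : ℕ}

theorem exists_separable_map_eval_minpoly {R : Type*} [CommRing R] [IsDomain R]
    [Algebra (MvPolynomial (Fin e) k) R] {θ : R}
    (hθ : IsIntegral (MvPolynomial (Fin e) k) θ) :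
    ∃ p : Fin e → k, ((minpoly (MvPolynomial (Fin e) k) θ).map (eval p)).Separable := by
  obtain ⟨s, hs, a, b, hab⟩ := exists_mul_minpoly_add_mul_derivative_eq_C hθ
  obtain ⟨p, hp⟩ : ∃ p, eval p s ≠ 0 := by
    contrapose! hs
    exact MvPolynomial.funext fun p => by rw [hs p, map_zero]
  refine ⟨p, ?_⟩
  have hbezout := congrArg (Polynomial.map (eval p)) hab
  simp only [Polynomial.map_add, Polynomial.map_mul, Polynomial.map_C] at hbezout
  rw [Polynomial.separable_def, Polynomial.derivative_map]
  refine ⟨.C (eval p s)⁻¹ * a.map (eval p), .C (eval p s)⁻¹ * b.map (eval p), ?_⟩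
  calc _ = Polynomial.C (eval p s)⁻¹ * ((minpoly _ θ).map (eval p) * a.map (eval p) +
        (minpoly _ θ).derivative.map (eval p) * b.map (eval p)) := by ring
    _ = 1 := by rw [hbezout, ← Polynomial.C_mul, inv_mul_cancel₀ hp, Polynomial.C_1]

/-- A fibre of the Noether normalization over which a primitive element takes as many values as
the rank of the extension. -/
theorem exists_finset_isPrime_sub_algebraMap_mem [IsAlgClosed k] {R : Type*} [CommRing R]
    [IsDomain R] [Algebra k R] [Algebra (MvPolynomial (Fin e) k) R]
    [IsScalarTower k (MvPolynomial (Fin e) k) R]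
    [Module.Finite (MvPolynomial (Fin e) k) R] [FaithfulSMul (MvPolynomial (Fin e) k) R] :
    ∃ (θ : R) (p : Fin e → k) (T : Finset k),
      T.card = Module.finrank (MvPolynomial (Fin e) k) R ∧
      ∀ t ∈ T, ∃ N : Ideal R, N.IsPrime ∧ θ - algebraMap k R t ∈ N ∧
        ∀ i, algebraMap (MvPolynomial (Fin e) k) R (X i) - algebraMap k R (p i) ∈ N := by
  classical
  obtain ⟨θ, hdeg⟩ := exists_natDegree_minpoly_eq_finrank (S := MvPolynomial (Fin e) k) (R := R)
  have hI : IsIntegral (MvPolynomial (Fin e) k) θ := Algebra.IsIntegral.isIntegral θ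
  obtain ⟨p, hsep⟩ := exists_separable_map_eval_minpoly hI
  have hmonic := minpoly.monic hI
  refine ⟨θ, p, ((minpoly (MvPolynomial (Fin e) k) θ).map (eval p)).roots.toFinset, ?_, ?_⟩
  · rw [Multiset.toFinset_card_of_nodup (Polynomial.nodup_roots hsep),
      ← (IsAlgClosed.splits _).natDegree_eq_card_roots, hmonic.natDegree_map, hdeg]
  · intro t ht
    rw [Multiset.mem_toFinset, Polynomial.mem_roots (hmonic.map _).ne_zero, Polynomial.IsRoot.def,
      Polynomial.eval_map] at ht
    obtain ⟨N, hN, hmem⟩ := exists_isPrime_aeval_mem_of_eval₂_minpoly_eq_zero θ (eval p) ht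
    have hconst (c : k) : algebraMap k R c = algebraMap (MvPolynomial (Fin e) k) R (C c) :=
      IsScalarTower.algebraMap_apply ..
    refine ⟨N, hN, ?_, fun i => ?_⟩
    · simpa [hconst] using hmem (.X - .C (C t)) (by simp)
    · rw [hconst, ← map_sub, ← Polynomial.aeval_C]
      exact hmem _ (by simp)

end Fibre

section DegreeLowerBound

variable {k : Type*} [Field k] {n e : ℕ}

theorem exists_affineMap_eval_eq {f : MvPolynomial (Fin n) k} (hf : f.totalDegree ≤ 1) :
    ∃ φ : (Fin n → k) →ᵃ[k] k, ∀ x, φ x = eval x f := by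
  have hspan : f ∈ affineSpan k (X : Fin n → MvPolynomial (Fin n) k) := by
    rw [← pow_one (affineSpan k X)]
    exact mem_affineSpan_pow.2 ⟨f, hf, aeval_X_left_apply f⟩
  clear hf
  induction hspan using Submodule.span_induction with
  | mem g hg =>
    obtain rfl | ⟨i, rfl⟩ := hg
    · exact ⟨AffineMap.const k _ 1, fun x => by simp⟩
    · exact ⟨(LinearMap.proj i).toAffineMap, fun x => by simp⟩
  | zero => exact ⟨0, fun x => by simp⟩
  | add g h _ _ hg hh =>
    obtain ⟨φ, hφ⟩ := hg
    obtain ⟨ψ, hψ⟩ := hh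
    exact ⟨φ + ψ, fun x => by simp [hφ, hψ]⟩
  | smul c g _ hg =>
    obtain ⟨φ, hφ⟩ := hg
    exact ⟨c • φ, fun x => by simp [hφ, smul_eval]⟩

theorem surjective_of_algebraicIndependent [Infinite k] {R : Type*} [CommRing R] [Algebra k R]
    (π : MvPolynomial (Fin n) k →ₐ[k] R) {f : Fin e → MvPolynomial (Fin n) k}
    (hf : AlgebraicIndependent k fun i => π (f i)) {φ : (Fin n → k) →ᵃ[k] Fin e → k}
    (hφ : ∀ x i, φ x i = eval x (f i)) : Function.Surjective φ := by
  rw [← AffineMap.linear_surjective_iff, ← LinearMap.dualMap_injective_iff,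
    injective_iff_map_eq_zero]
  intro d hd
  obtain ⟨c, rfl⟩ := (dotProductEquiv k (Fin e)).surjective d
  let g : MvPolynomial (Fin e) k := ∑ i, C (c i) * X i - C (c ⬝ᵥ φ 0)
  have hg (z) : eval z g = c ⬝ᵥ z - c ⬝ᵥ φ 0 := by simp [g, dotProduct]
  have hcφ (x) : c ⬝ᵥ φ x = c ⬝ᵥ φ 0 := by
    rw [← sub_eq_zero, ← dotProduct_sub, ← vsub_eq_sub, ← AffineMap.linearMap_vsub]
    exact LinearMap.congr_fun hd _
  have hgf : aeval f g = 0 := MvPolynomial.funext fun x => by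
    have heval : eval x (aeval f g) = eval (φ x) g := by simp [g, hφ]
    rw [heval, hg, hcφ, sub_self, map_zero]
  have hg0 : g = 0 := hf (by rw [map_zero, ← comp_aeval_apply, hgf, map_zero])
  have hconst (z) : c ⬝ᵥ z = c ⬝ᵥ φ 0 := by rw [← sub_eq_zero, ← hg, hg0, map_zero]
  have hc (z) : c ⬝ᵥ z = 0 := by rw [hconst, ← hconst 0, dotProduct_zero]
  rw [dotProduct_eq_zero c hc, map_zero]

theorem IsNoetherNormalization.finite_zeroLocus_inter {Q : Ideal (MvPolynomial (Fin n) ℂ)}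
    {f : Fin e → MvPolynomial (Fin n) ℂ}
    (h : IsNoetherNormalization ℂ (quotientVars Q) fun i => Ideal.Quotient.mk Q (f i))
    (p : Fin e → ℂ) : {x ∈ zeroLocus n Q | ∀ i, eval x (f i) = p i}.Finite := by
  classical
  have hI := (h.finite (aeval_quotientVars_surjective Q)).to_isIntegral
  choose g hmonic hroot using fun j => hI (quotientVars Q j)
  refine (Set.Finite.pi' fun j => ((g j).map (eval p)).roots.toFinset.finite_toSet).subset ?_
  rintro x ⟨hxQ, hxp⟩ j
  let ev : MvPolynomial (Fin n) ℂ ⧸ Q →+* ℂ := Ideal.Quotient.lift Q (eval x) hxQ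
  have hev (g) : ev (Ideal.Quotient.mk Q g) = eval x g := Ideal.Quotient.lift_mk _ _ _
  have hcomp : ev.comp (aeval fun i => Ideal.Quotient.mk Q (f i)).toRingHom = eval p := by
    refine MvPolynomial.ringHom_ext (fun r => ?_) fun i => ?_
    · simpa [← Ideal.Quotient.mk_algebraMap, algebraMap_eq] using hev (C r)
    · simpa [hxp i] using hev (f i)
  have hzero := congrArg ev (hroot j)
  rw [map_zero, Polynomial.hom_eval₂, hcomp, quotientVars, hev, eval_X,
    ← Polynomial.eval_map] at hzero
  rw [Finset.mem_coe, Multiset.mem_toFinset, Polynomial.mem_roots ((hmonic j).map _).ne_zero]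
  exact hzero

theorem exists_eval_eq_zero_of_isPrime {Q : Ideal (MvPolynomial (Fin n) ℂ)}
    {N : Ideal (MvPolynomial (Fin n) ℂ ⧸ Q)} (hN : N.IsPrime) :
    ∃ x ∈ zeroLocus n Q, ∀ f, Ideal.Quotient.mk Q f ∈ N → eval x f = 0 := by
  obtain ⟨M, hM, hNM⟩ := N.exists_le_maximal hN.ne_top
  have := Ideal.comap_isMaximal_of_surjective (Ideal.Quotient.mk Q) Ideal.Quotient.mk_surjective
    (K := M)
  obtain ⟨x, hx⟩ := MvPolynomial.eq_vanishingIdeal_singleton_of_isMaximal ℂ this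
  have heval (f) (hf : Ideal.Quotient.mk Q f ∈ M) : eval x f = 0 := by
    have := MvPolynomial.mem_vanishingIdeal_iff.1 (hx.le hf) x rfl
    exact this
  refine ⟨x, fun f hf => heval f ?_, fun f hf => heval f (hNM hf)⟩
  rw [Ideal.Quotient.eq_zero_iff_mem.2 hf]
  exact M.zero_mem

theorem exists_affineSubspace_eval_eq [Infinite k] {R : Type*} [CommRing R] [Algebra k R]
    (π : MvPolynomial (Fin n) k →ₐ[k] R) {f : Fin e → MvPolynomial (Fin n) k}
    (hdeg : ∀ i, (f i).totalDegree ≤ 1) (hf : AlgebraicIndependent k fun i => π (f i))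
    (p : Fin e → k) : ∃ L : AffineSubspace k (Fin n → k),
      Module.finrank k L.direction = n - e ∧ ∀ x, x ∈ L ↔ ∀ i, eval x (f i) = p i := by
  choose ψ hψ using fun i => exists_affineMap_eval_eq (hdeg i)
  have hsurj : Function.Surjective (AffineMap.pi ψ) :=
    surjective_of_algebraicIndependent π hf fun x i => hψ i x
  obtain ⟨x₀, hx₀⟩ := hsurj p
  refine ⟨AffineSubspace.mk' x₀ (AffineMap.pi ψ).linear.ker, ?_, fun x => ?_⟩
  · have hrank := (AffineMap.pi ψ).linear.finrank_range_add_finrank_ker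
    rw [LinearMap.range_eq_top.2 ((AffineMap.linear_surjective_iff _).2 hsurj), finrank_top,
      Module.finrank_fin_fun, Module.finrank_fin_fun] at hrank
    rw [AffineSubspace.direction_mk']
    omega
  · rw [AffineSubspace.mem_mk', LinearMap.mem_ker, AffineMap.linearMap_vsub, vsub_eq_zero_iff_eq,
      hx₀]
    simp [_root_.funext_iff, hψ]

theorem HasDim.exists_fibre {Q : Ideal (MvPolynomial (Fin n) ℂ)} [Q.IsPrime] (hQ : HasDim Q e) :
    ∃ (f : Fin e → MvPolynomial (Fin n) ℂ) (p : Fin e → ℂ) (F : Finset (Fin n → ℂ)),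
      (∀ i, (f i).totalDegree ≤ 1) ∧
      IsNoetherNormalization ℂ (quotientVars Q) (fun i => Ideal.Quotient.mk Q (f i)) ∧
      (∀ x ∈ F, x ∈ zeroLocus n Q ∧ ∀ i, eval x (f i) = p i) ∧
      ∀ D, hilbertFunction Q D ≤ F.card * (D + 1) ^ e := by
  classical
  obtain ⟨y, hy⟩ := hQ
  obtain ⟨_, _, _, _, hS⟩ := hy.exists_algebra (aeval_quotientVars_surjective _)
  obtain ⟨θ, p, T, hT, hfibre⟩ := exists_finset_isPrime_sub_algebraMap_mem (k := ℂ)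
    (e := e) (R := MvPolynomial (Fin n) ℂ ⧸ Q)
  have hlin (i) : ∃ f : MvPolynomial (Fin n) ℂ, f.totalDegree ≤ 1 ∧ Ideal.Quotient.mk Q f =
      algebraMap (MvPolynomial (Fin e) ℂ) (MvPolynomial (Fin n) ℂ ⧸ Q) (X i) :=
    mem_affineSpan_quotientVars_pow.1 (by simpa using hS.mem i)
  choose f hdeg hf using hlin
  obtain ⟨θ, rfl⟩ := Ideal.Quotient.mk_surjective θ
  have hpoint (t) (ht : t ∈ T) :
      ∃ x ∈ zeroLocus n Q, (∀ i, eval x (f i) = p i) ∧ eval x θ = t := by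
    obtain ⟨N, hN, hθ, hX⟩ := hfibre t ht
    obtain ⟨x, hxQ, hx⟩ := exists_eval_eq_zero_of_isPrime hN
    refine ⟨x, hxQ, fun i => ?_, ?_⟩
    · have hzero := hx (f i - C (p i)) (by rw [map_sub, hf]; exact hX i)
      rwa [map_sub, eval_C, sub_eq_zero] at hzero
    · have hzero := hx (θ - C t) (by rw [map_sub]; exact hθ)
      rwa [map_sub, eval_C, sub_eq_zero] at hzero
  choose! x hxQ hxp hxθ using hpoint
  have hinj : InjOn x T := fun t ht t' ht' heq => by rw [← hxθ t ht, ← hxθ t' ht', heq]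
  refine ⟨f, p, T.image x, hdeg, by simpa only [hf] using hS,
    Finset.forall_mem_image.2 fun t ht => ⟨hxQ t ht, hxp t ht⟩, fun D => ?_⟩
  rw [Finset.card_image_of_injOn hinj, hT]
  exact hS.finrank_le D

theorem IsIrredVariety.hilbertFunction_le_degree_mul {W : Set (Fin n → ℂ)}
    (hW : IsIrredVariety n W) (D : ℕ) :
    hilbertFunction (vanishingIdeal n W) D ≤ degree n W * (D + 1) ^ dim n W := by
  have := hW.isPrime
  obtain ⟨f, p, F, hdeg, hf, hF, hle⟩ := hW.hasDim_dim.exists_fibre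
  rw [hW.1.zeroLocus_vanishingIdeal] at hF
  obtain ⟨L, hLdim, hL⟩ := exists_affineSubspace_eval_eq (Ideal.Quotient.mkₐ ℂ _) hdeg
    hf.algebraicIndependent p
  have hfin : (W ∩ L).Finite := by
    refine (hf.finite_zeroLocus_inter p).subset fun x hx => ⟨?_, (hL x).1 hx.2⟩
    rw [hW.1.zeroLocus_vanishingIdeal]
    exact hx.1
  have hcard : F.card ≤ (W ∩ L).ncard := by
    rw [← ncard_coe_finset]
    exact ncard_le_ncard (fun x hx => ⟨(hF x hx).1, (hL x).2 (hF x hx).2⟩) hfin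
  calc hilbertFunction (vanishingIdeal n W) D ≤ F.card * (D + 1) ^ dim n W := hle D
    _ ≤ degree n W * (D + 1) ^ dim n W := by
      gcongr
      exact hcard.trans (hW.ncard_inter_le_degree hLdim hfin)

end DegreeLowerBound

section Comparison

theorem le_mul_of_prod_le_mul_prod {ι R : Type*} [CommSemiring R] [LinearOrder R]
    [IsStrictOrderedRing R] {s : Finset ι} {f g : ι → R} {c : R} (hpos : ∀ i ∈ s, 0 < g i)
    (hle : ∀ i ∈ s, g i ≤ f i) (h : ∏ i ∈ s, f i ≤ c * ∏ i ∈ s, g i) {i : ι} (hi : i ∈ s) :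
    f i ≤ c * g i := by
  classical
  have herase (j) (hj : j ∈ s.erase i) := Finset.mem_of_mem_erase hj
  refine le_of_mul_le_mul_right ?_ (Finset.prod_pos fun j hj => hpos j (herase j hj))
  calc f i * ∏ j ∈ s.erase i, g j ≤ f i * ∏ j ∈ s.erase i, f j :=
        mul_le_mul_of_nonneg_left (Finset.prod_le_prod (fun j hj => (hpos j (herase j hj)).le)
          fun j hj => hle j (herase j hj)) ((hpos i hi).le.trans (hle i hi))
    _ ≤ c * g i * ∏ j ∈ s.erase i, g j := by
        rwa [mul_assoc, Finset.mul_prod_erase s f hi, Finset.mul_prod_erase s g hi]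

theorem HasDim.prod_codimDegree_le {k : Type*} [Field k] [Infinite k] {n d m : ℕ}
    {Q Q' : Ideal (MvPolynomial (Fin n) k)} [Q.IsPrime] [Q'.IsPrime] (hQ : HasDim Q d)
    (hQ' : HasDim Q' (n - m)) (hle : Q' ≤ Q) (hm : 1 ≤ m) (hmd : m + d ≤ n) :
    ∏ i ∈ Finset.Icc 1 m, codimDegree Q i ≤
      (2 * (n + 1)) ^ (n * m) * (n + 2) ^ n * ∏ i ∈ Finset.Icc 1 m, codimDegree Q' i := by
  have hpos := codimDegree_pos hQ hmd hm
  refine Nat.le_of_mul_le_mul_left ?_ (pow_pos hpos (n - m))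
  calc codimDegree Q m ^ (n - m) * ∏ i ∈ Finset.Icc 1 m, codimDegree Q i
      ≤ (2 * (n + 1)) ^ (n * m) * hilbertFunction Q (codimDegree Q m) :=
        hQ.pow_mul_prod_codimDegree_le hm hmd
    _ ≤ (2 * (n + 1)) ^ (n * m) * hilbertFunction Q' (codimDegree Q m) :=
        Nat.mul_le_mul_left _ (hilbertFunction_anti hle _)
    _ ≤ (2 * (n + 1)) ^ (n * m) * ((n + 2) ^ n * codimDegree Q m ^ (n - m) *
          ∏ i ∈ Finset.Icc 1 m, codimDegree Q' i) :=
        Nat.mul_le_mul_left _ (hQ'.hilbertFunction_le_mul_prod_codimDegree (by omega) hpos)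
    _ = _ := by ring

variable {n m i : ℕ} {V W : Set (Fin n → ℂ)}

theorem IsIrredVariety.prod_codimDegree_le_degree {Q : Ideal (MvPolynomial (Fin n) ℂ)} [Q.IsPrime]
    {d : ℕ} (hW : IsIrredVariety n W) (hdim : dim n W = n - m) (hQ : HasDim Q d)
    (hle : vanishingIdeal n W ≤ Q) (hm : 1 ≤ m) (hmd : m + d ≤ n) :
    ∏ i ∈ Finset.Icc 1 m, codimDegree Q i ≤
      (2 * (n + 1)) ^ (n * m) * (n + 2) ^ n * degree n W := by
  have hpos := codimDegree_pos hQ hmd hm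
  refine Nat.le_of_mul_le_mul_left ?_ (pow_pos hpos (n - m))
  calc codimDegree Q m ^ (n - m) * ∏ i ∈ Finset.Icc 1 m, codimDegree Q i
      ≤ (2 * (n + 1)) ^ (n * m) * hilbertFunction Q (codimDegree Q m) :=
        hQ.pow_mul_prod_codimDegree_le hm hmd
    _ ≤ (2 * (n + 1)) ^ (n * m) * hilbertFunction (vanishingIdeal n W) (codimDegree Q m) :=
        Nat.mul_le_mul_left _ (hilbertFunction_anti hle _)
    _ ≤ (2 * (n + 1)) ^ (n * m) * (degree n W * (codimDegree Q m + 1) ^ (n - m)) :=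
        Nat.mul_le_mul_left _ (hdim ▸ hW.hilbertFunction_le_degree_mul _)
    _ ≤ (2 * (n + 1)) ^ (n * m) * (degree n W * ((n + 2) ^ n * codimDegree Q m ^ (n - m))) := by
        gcongr
        calc (codimDegree Q m + 1) ^ (n - m) ≤ ((n + 2) * codimDegree Q m) ^ (n - m) := by
              gcongr
              nlinarith
          _ ≤ (n + 2) ^ n * codimDegree Q m ^ (n - m) := by
              rw [mul_pow]
              gcongr <;> omega
    _ = _ := by ring

theorem zeroLocusUpTo_eq (P : ℕ → MvPolynomial (Fin n) ℂ) (i : ℕ) :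
    zeroLocusUpTo n P i = zeroLocus n (P '' Icc 1 i) := by
  simp only [zeroLocusUpTo, image, mem_Icc, and_assoc, eq_comm]

/-- Near `V` the polynomials `P 1, …, P i` cut out codimension `i`. They all vanish on `W ⊇ V`, so
they cut out at least that codimension near `W`. -/
theorem IsIrredVariety.partialDeg_le (hV : IsIrredVariety n V) (hW : IsIrredVariety n W)
    (hVW : V ⊆ W) (hdim : dim n W = n - m) (hm : m ≤ n - dim n V)
    {P : ℕ → MvPolynomial (Fin n) ℂ} (hWP : W ⊆ zeroLocusUpTo n P m)
    (hP : ∀ i ∈ Finset.Icc 1 m, (P i).totalDegree ≤ partialDeg n V i ∧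
      MaxCompDimEq n (zeroLocusUpTo n P i) V (n - i)) (hi : i ∈ Finset.Icc 1 m) :
    partialDeg n W i ≤ partialDeg n V i := by
  have hVn := hV.dim_le
  have ⟨hi1, him⟩ := Finset.mem_Icc.1 hi
  rw [zeroLocusUpTo_eq, subset_zeroLocus_iff_span_le] at hWP
  have hspan : Ideal.span (P '' Icc 1 i) ≤ vanishingIdeal n W :=
    (Ideal.span_mono (image_mono (Icc_subset_Icc_right him))).trans hWP
  have hdeg : ∀ f ∈ P '' Icc 1 i, f.totalDegree ≤ partialDeg n V i := by
    rintro _ ⟨j, ⟨hj1, hji⟩, rfl⟩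
    refine (hP j (Finset.mem_Icc.2 ⟨hj1, hji.trans him⟩)).1.trans ?_
    rw [hV.partialDeg_eq_codimDegree (by omega) (by omega),
      hV.partialDeg_eq_codimDegree (by omega) (by omega)]
    exact codimDegree_mono hV.hasDim_dim hji (by omega)
  have hmax := (hP i hi).2
  rw [zeroLocusUpTo_eq, hV.maxCompDimEq_iff] at hmax
  rw [hW.partialDeg_eq_codimDegree (by omega) (by omega),
    codimDegree_le_iff hW.hasDim_dim (by omega)]
  intro e he
  have := hmax.2 (dimsBetween_subset (span_le_lowDegreeIdeal hspan hdeg)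
    (vanishingIdeal_anti hVW) he)
  omega

theorem IsIrredVariety.partialDeg_pos (hV : IsIrredVariety n V) (hi : i ∈ Finset.Icc 1 m)
    (hm : m ≤ n - dim n V) : 0 < partialDeg n V i := by
  have hVn := hV.dim_le
  have ⟨hi1, him⟩ := Finset.mem_Icc.1 hi
  have := hV.isPrime
  rw [hV.partialDeg_eq_codimDegree (by omega) (by omega)]
  exact codimDegree_pos hV.hasDim_dim (by omega) hi1

theorem IsIrredVariety.prod_partialDeg_eq (hV : IsIrredVariety n V) (hm : m ≤ n) :
    ∏ i ∈ Finset.Icc 1 m, partialDeg n V i =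
      ∏ i ∈ Finset.Icc 1 m, codimDegree (vanishingIdeal n V) i :=
  Finset.prod_congr rfl fun i hi => by
    rw [Finset.mem_Icc] at hi
    exact hV.partialDeg_eq_codimDegree (by omega) (by omega)

/-- A constant realizing the comparisons `∼_n` of the theorem: an upper bound holds with it, a
lower bound with its inverse. -/
def comparisonConst (n : ℕ) : ℕ :=
  (2 * (n + 1)) ^ (n * n) * (n + 2) ^ n * (n + 1) ^ n

theorem comparisonConst_pos (n : ℕ) : 0 < comparisonConst n := by
  unfold comparisonConst
  positivity

theorem le_comparisonConst (hm : m ≤ n) :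
    (2 * (n + 1)) ^ (n * m) * (n + 2) ^ n ≤ comparisonConst n :=
  calc (2 * (n + 1)) ^ (n * m) * (n + 2) ^ n ≤ (2 * (n + 1)) ^ (n * n) * (n + 2) ^ n := by
        gcongr
        omega
    _ ≤ comparisonConst n := Nat.le_mul_of_pos_right _ (by positivity)

theorem IsIrredVariety.prod_partialDeg_le_degree (hV : IsIrredVariety n V)
    (hW : IsIrredVariety n W) (hVW : V ⊆ W) (hdim : dim n W = n - m) (hm1 : 1 ≤ m)
    (hm : m ≤ n - dim n V) :
    ∏ i ∈ Finset.Icc 1 m, partialDeg n V i ≤ comparisonConst n * degree n W := by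
  have := hV.isPrime
  have hVn := hV.dim_le
  rw [hV.prod_partialDeg_eq (by omega)]
  exact (hW.prod_codimDegree_le_degree hdim hV.hasDim_dim (vanishingIdeal_anti hVW) hm1
    (by omega)).trans (Nat.mul_le_mul_right _ (le_comparisonConst (by omega)))

theorem IsIrredVariety.degree_le_prod_partialDeg (hW : IsIrredVariety n W)
    (hdim : dim n W = n - m) (hm : m ≤ n) :
    degree n W ≤ comparisonConst n * ∏ i ∈ Finset.Icc 1 m, partialDeg n W i := by
  rw [hW.prod_partialDeg_eq hm]
  refine (hW.degree_le hm hdim).trans (Nat.mul_le_mul_right _ ?_)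
  rw [comparisonConst, mul_assoc]
  exact Nat.le_mul_of_pos_left _ (by positivity)

theorem IsIrredVariety.partialDeg_le_mul (hV : IsIrredVariety n V) (hW : IsIrredVariety n W)
    (hVW : V ⊆ W) (hdim : dim n W = n - m) (hm : m ≤ n - dim n V)
    (hle : ∀ i ∈ Finset.Icc 1 m, partialDeg n W i ≤ partialDeg n V i) (hi : i ∈ Finset.Icc 1 m) :
    partialDeg n V i ≤ comparisonConst n * partialDeg n W i := by
  have := hV.isPrime
  have := hW.isPrime
  have hVn := hV.dim_le
  have ⟨hi1, him⟩ := Finset.mem_Icc.1 hi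
  refine le_mul_of_prod_le_mul_prod (fun j hj => hW.partialDeg_pos hj (by omega)) hle ?_ hi
  rw [hV.prod_partialDeg_eq (by omega), hW.prod_partialDeg_eq (by omega)]
  exact (hV.hasDim_dim.prod_codimDegree_le (hdim ▸ hW.hasDim_dim) (vanishingIdeal_anti hVW)
    (by omega) (by omega)).trans (Nat.mul_le_mul_right _ (le_comparisonConst (by omega)))

end Comparison

theorem statement17_general (n : ℕ) :
    ∃ c C : ℝ, 0 < c ∧ 0 < C ∧
      ∀ V : Set (Fin n → ℂ), IsIrredVariety n V →
        ∀ m ∈ Finset.Icc 1 (n - dim n V), ∀ P : ℕ → MvPolynomial (Fin n) ℂ,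
          (∀ i ∈ Finset.Icc 1 m,
            (P i).totalDegree ≤ partialDeg n V i ∧
            MaxCompDimEq n (zeroLocusUpTo n P i) V (n - i)) →
          ∀ W, IsIrredVariety n W → W ⊆ zeroLocusUpTo n P m → dim n W = n - m → V ⊆ W →
            (c * ∏ i ∈ Finset.Icc 1 m, (partialDeg n V i : ℝ) ≤ (degree n W : ℝ) ∧
              (degree n W : ℝ) ≤ C * ∏ i ∈ Finset.Icc 1 m, (partialDeg n V i : ℝ)) ∧
            ∀ i ∈ Finset.Icc 1 m,
              c * (partialDeg n V i : ℝ) ≤ (partialDeg n W i : ℝ) ∧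
              (partialDeg n W i : ℝ) ≤ C * (partialDeg n V i : ℝ) := by
  have hK := comparisonConst_pos n
  have hKr : (0 : ℝ) < comparisonConst n := by exact_mod_cast hK
  refine ⟨(comparisonConst n : ℝ)⁻¹, comparisonConst n, inv_pos.2 hKr, hKr, ?_⟩
  intro V hV m hm P hP W hW hWP hdim hVW
  obtain ⟨hm1, hm⟩ := Finset.mem_Icc.1 hm
  have hle (i) (hi : i ∈ Finset.Icc 1 m) : partialDeg n W i ≤ partialDeg n V i :=
    hV.partialDeg_le hW hVW hdim hm hWP hP hi
  simp only [inv_mul_le_iff₀ hKr]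
  norm_cast
  refine ⟨⟨hV.prod_partialDeg_le_degree hW hVW hdim hm1 hm, ?_⟩, fun i hi =>
    ⟨hV.partialDeg_le_mul hW hVW hdim hm hle hi, (hle i hi).trans (Nat.le_mul_of_pos_left _ hK)⟩⟩
  calc degree n W ≤ comparisonConst n * ∏ i ∈ Finset.Icc 1 m, partialDeg n W i :=
        hW.degree_le_prod_partialDeg hdim (by omega)
    _ ≤ comparisonConst n * ∏ i ∈ Finset.Icc 1 m, partialDeg n V i :=
        Nat.mul_le_mul_left _ (Finset.prod_le_prod' hle)

/-- Theorem 5.5 of the paper: for polynomials `P₁, …, P_{n-d}` as in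
Lemma 5.3, every `(n-m)`-dimensional irreducible component `W` of `Z(P₁, …, P_m)` containing
`V` satisfies `deg W ∼_n ∏_{i=1}^m δ_i(V)` and `δ_i(W) ∼_n δ_i(V)` for `1 ≤ i ≤ m`. -/
theorem statement17 (n : ℕ) :
    ∃ c C : ℝ, 0 < c ∧ 0 < C ∧
      ∀ (V : Set (Fin n → ℂ)) (d : ℕ), IsIrredVariety n V → dim n V = d →
        ∀ P : ℕ → MvPolynomial (Fin n) ℂ,
          (∀ i ∈ Finset.Icc 1 (n - d),
            (P i).totalDegree = partialDeg n V i ∧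
            MaxCompDimEq n (zeroLocusUpTo n P i) V (n - i) ∧
            (∃ V', IsMinimalVariety n V V' i ∧ V' ⊆ zeroLocusUpTo n P i)) →
          ∀ m ∈ Finset.Icc 1 (n - d),
            ∀ W, IsIrredComponent n W (zeroLocusUpTo n P m) → dim n W = n - m → V ⊆ W →
              (c * ∏ i ∈ Finset.Icc 1 m, (partialDeg n V i : ℝ) ≤ (degree n W : ℝ) ∧
                (degree n W : ℝ) ≤ C * ∏ i ∈ Finset.Icc 1 m, (partialDeg n V i : ℝ)) ∧
              ∀ i ∈ Finset.Icc 1 m,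
                c * (partialDeg n V i : ℝ) ≤ (partialDeg n W i : ℝ) ∧
                (partialDeg n W i : ℝ) ≤ C * (partialDeg n V i : ℝ) := by
  obtain ⟨c, C, hc, hC, h⟩ := statement17_general n
  refine ⟨c, C, hc, hC, ?_⟩
  rintro V _ hV rfl P hP m hm W hW
  exact h V hV m hm P (fun i hi => (hP i (Finset.Icc_subset_Icc_right (Finset.mem_Icc.1 hm).2
    hi)).imp Eq.le And.left) W hW.1 hW.2.1

end Paper
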